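/- arXiv:1710.11402 — 2 statements merged into one kernel-verified Lean document; each statement's English description precedes it below -/
import Mathlib

section
/- Boolean Breiman theorem, dominated case: let 0 ≤ α < β and let μ, ν be probability measures on [0,∞) with regularly varying tails of index −α and −β respectively, where ν has finite mean m(ν) = ∫ x dν(x). If ρ is a probability measure on [0,∞) with B_ρ(z) = B_μ(z)·B_ν(z) for all z ∈ ℂ∖[0,∞) (so ρ = μ ⨯∪ ν, the multiplicative Boolean convolution of μ and ν), then ρ has regularly varying tail of index −α and ρ(y,∞)/(m(ν)·μ(y,∞)) → 1 as y → ∞. -/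
open MeasureTheory Filter Set Complex

noncomputable section

/-- `Ψ_τ(z) = ∫ zt/(1 − zt) dτ(t)`. -/
def PsiTrans (τ : Measure ℝ) (z : ℂ) : ℂ := ∫ t, (z * (t : ℂ)) / (1 - z * (t : ℂ)) ∂τ

/-- `η_τ(z) = Ψ_τ(z)/(1 + Ψ_τ(z))`. -/
def etaTrans (τ : Measure ℝ) (z : ℂ) : ℂ := PsiTrans τ z / (1 + PsiTrans τ z)

/-- `B_τ(z) = z/η_τ(z)`. -/
def Btrans (τ : Measure ℝ) (z : ℂ) : ℂ := z / etaTrans τ z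

/-- membership of `z` in `ℂ ∖ [0,∞)`. -/
def offHalfLine (z : ℂ) : Prop := z.im ≠ 0 ∨ z.re < 0

/-- `μ` has a regularly varying tail of index `−α`. -/
def RegVarTail (μ : Measure ℝ) (α : ℝ) : Prop :=
  (∀ x : ℝ, 0 ≤ x → 0 < μ (Set.Ioi x)) ∧
  ∀ t : ℝ, 0 < t →
    Filter.Tendsto (fun x : ℝ => (μ (Set.Ioi (t * x))).toReal / (μ (Set.Ioi x)).toReal)
      Filter.atTop (nhds (t ^ (-α)))

namespace BB

open Topology Asymptotics

/-- `F z` is the formal Taylor series at `z` of a smooth function on the positive half line. -/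
def IsTaylor (F : ℝ → PowerSeries ℝ) : Prop :=
  ∀ z : ℝ, 0 < z → ∀ j : ℕ, HasDerivAt (fun y => PowerSeries.coeff j (F y))
    (PowerSeries.coeff j (PowerSeries.derivative (R := ℝ) (F z))) z

lemma IsTaylor.add {F G : ℝ → PowerSeries ℝ} (hF : IsTaylor F) (hG : IsTaylor G) :
    IsTaylor (fun z => F z + G z) := by
  intro z hz j
  simp only [map_add]; exact (hF z hz j).add (hG z hz j)

lemma IsTaylor.sub {F G : ℝ → PowerSeries ℝ} (hF : IsTaylor F) (hG : IsTaylor G) :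
    IsTaylor (fun z => F z - G z) := by
  intro z hz j
  simp only [map_sub]; exact (hF z hz j).sub (hG z hz j)

lemma IsTaylor.mul {F G : ℝ → PowerSeries ℝ} (hF : IsTaylor F) (hG : IsTaylor G) :
    IsTaylor (fun z => F z * G z) := by
  intro z hz j
  have h1 : HasDerivAt (fun y => ∑ p ∈ Finset.HasAntidiagonal.antidiagonal j,
      PowerSeries.coeff p.1 (F y) * PowerSeries.coeff p.2 (G y))
      (∑ p ∈ Finset.HasAntidiagonal.antidiagonal j,
      (PowerSeries.coeff p.1 (PowerSeries.derivative (R := ℝ) (F z)) * PowerSeries.coeff p.2 (G z)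
      + PowerSeries.coeff p.1 (F z) * PowerSeries.coeff p.2 (PowerSeries.derivative (R := ℝ) (G z)))) z := by
    apply HasDerivAt.fun_sum
    intro p _
    exact (hF z hz p.1).mul (hG z hz p.2)
  have h2 : (fun y => PowerSeries.coeff j (F y * G y)) = (fun y => ∑ p ∈ Finset.HasAntidiagonal.antidiagonal j,
      PowerSeries.coeff p.1 (F y) * PowerSeries.coeff p.2 (G y)) := by
    funext y; rw [PowerSeries.coeff_mul]
  rw [h2]
  convert h1 using 1
  rw [Derivation.leibniz, Finset.sum_add_distrib, map_add]
  simp only [smul_eq_mul]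
  rw [PowerSeries.coeff_mul, mul_comm (G z), PowerSeries.coeff_mul, add_comm]

lemma isTaylor_id : IsTaylor (fun z => PowerSeries.C z + PowerSeries.X) := by
  intro z hz j
  rcases j with _ | j
  · simp; exact hasDerivAt_id z
  · have : (fun y : ℝ => PowerSeries.coeff (j+1) (PowerSeries.C y + PowerSeries.X : PowerSeries ℝ)) =
      fun y => PowerSeries.coeff (j+1) (PowerSeries.X : PowerSeries ℝ) := by
      funext y; simp
    rw [this]
    have h2 : PowerSeries.coeff (j+1) (PowerSeries.derivative (R := ℝ) (PowerSeries.C z + PowerSeries.X)) = 0 := by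
      simp [PowerSeries.coeff_one]
    rw [h2]
    exact hasDerivAt_const _ _

lemma IsTaylor.unique {F G : ℝ → PowerSeries ℝ} (hF : IsTaylor F) (hG : IsTaylor G)
    (h0 : ∀ z : ℝ, 0 < z → PowerSeries.coeff 0 (F z) = PowerSeries.coeff 0 (G z)) :
    ∀ z : ℝ, 0 < z → F z = G z := by
  have key : ∀ j : ℕ, ∀ z : ℝ, 0 < z → PowerSeries.coeff j (F z) = PowerSeries.coeff j (G z) := by
    intro j
    induction j with
    | zero => exact h0
    | succ j ih =>
      intro z hz
      have hev : (fun y => PowerSeries.coeff j (F y)) =ᶠ[𝓝 z] (fun y => PowerSeries.coeff j (G y)) := by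
        filter_upwards [lt_mem_nhds hz] with y hy using ih y hy
      have := ((hG z hz j).congr_of_eventuallyEq hev).unique (hF z hz j)
      rw [PowerSeries.coeff_derivative, PowerSeries.coeff_derivative] at this
      have hj : ((j:ℝ)+1) ≠ 0 := by positivity
      exact (mul_right_cancel₀ hj this).symm
  intro z hz
  ext j
  exact key j z hz

/-- `∫ (t/(1+zt))^k dτ`. -/
def A (τ : Measure ℝ) (k : ℕ) (z : ℝ) : ℝ := ∫ t, (t / (1 + z * t)) ^ k ∂τ

/-- `∫ (zt/(1+zt))^k dτ`. -/
def V (τ : Measure ℝ) (k : ℕ) (z : ℝ) : ℝ := ∫ t, (z * t / (1 + z * t)) ^ k ∂τ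

lemma V_eq (τ : Measure ℝ) (k : ℕ) (z : ℝ) : V τ k z = z ^ k * A τ k z := by
  unfold V A
  rw [← integral_const_mul]
  congr 1; funext t
  rw [← mul_pow, mul_div_assoc]

lemma ae_nonneg {τ : Measure ℝ} (h : τ (Set.Iio (0:ℝ)) = 0) : ∀ᵐ t ∂τ, 0 ≤ t := by
  rw [ae_iff]
  convert h using 2
  ext t; simp

lemma frac_bd {z t : ℝ} (hz : 0 < z) (ht : 0 ≤ t) : 0 ≤ t / (1 + z * t) ∧ t / (1 + z * t) ≤ z⁻¹ := by
  have h : 0 < 1 + z * t := by positivity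
  refine ⟨by positivity, ?_⟩
  rw [div_le_iff₀ h]
  have : z⁻¹ * (1 + z * t) = z⁻¹ + t := by field_simp
  rw [this]
  have : 0 < z⁻¹ := by positivity
  linarith

lemma v_bd {z t : ℝ} (hz : 0 < z) (ht : 0 ≤ t) : 0 ≤ z * t / (1 + z * t) ∧ z * t / (1 + z * t) ≤ 1 := by
  have h : 0 < 1 + z * t := by positivity
  refine ⟨by positivity, ?_⟩
  rw [div_le_iff₀ h]
  linarith

lemma A_integrable {τ : Measure ℝ} [IsProbabilityMeasure τ] (h : τ (Set.Iio (0:ℝ)) = 0) (k : ℕ)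
    {z : ℝ} (hz : 0 < z) : Integrable (fun t : ℝ => (t / (1 + z * t)) ^ k) τ := by
  refine Integrable.mono' (integrable_const ((z⁻¹)^k)) (Measurable.aestronglyMeasurable (by fun_prop)) ?_
  filter_upwards [ae_nonneg h] with t ht
  obtain ⟨h1, h2⟩ := frac_bd hz ht
  rw [Real.norm_of_nonneg (by positivity)]
  gcongr

lemma V_integrable {τ : Measure ℝ} [IsProbabilityMeasure τ] (h : τ (Set.Iio (0:ℝ)) = 0) (k : ℕ)
    {z : ℝ} (hz : 0 < z) : Integrable (fun t : ℝ => (z * t / (1 + z * t)) ^ k) τ := by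
  refine Integrable.mono' (integrable_const (1:ℝ)) (Measurable.aestronglyMeasurable (by fun_prop)) ?_
  filter_upwards [ae_nonneg h] with t ht
  obtain ⟨h1, h2⟩ := v_bd hz ht
  rw [Real.norm_of_nonneg (by positivity)]
  exact pow_le_one₀ h1 h2

lemma A_hasDerivAt {τ : Measure ℝ} [IsProbabilityMeasure τ] (h : τ (Set.Iio (0:ℝ)) = 0) (k : ℕ)
    {z : ℝ} (hz : 0 < z) : HasDerivAt (A τ (k+1)) (-(k+1) * A τ (k+2) z) z := by
  have := hasDerivAt_integral_of_dominated_loc_of_deriv_le (μ := τ) (𝕜 := ℝ)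
    (F := fun z t => (t / (1 + z * t)) ^ (k+1))
    (F' := fun z t => -(k+1) * (t / (1 + z * t)) ^ (k+2)) (x₀ := z) (s := Set.Ioi (z/2))
    (bound := fun _ => (k+1) * ((z/2)⁻¹)^(k+2)) (Ioi_mem_nhds (by linarith))
    (Eventually.of_forall fun y => Measurable.aestronglyMeasurable (by fun_prop)) (A_integrable h (k+1) hz) (Measurable.aestronglyMeasurable (by fun_prop))
    ?_ (integrable_const _) ?_
  · have h2 := this.2
    rw [integral_const_mul] at h2
    exact h2
  · filter_upwards [ae_nonneg h] with t ht y hy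
    have hy' : z/2 < y := hy
    have hy0 : 0 < y := by linarith
    obtain ⟨h1, h2⟩ := frac_bd hy0 ht
    have h3 : y⁻¹ ≤ (z/2)⁻¹ := by gcongr
    rw [norm_mul, Real.norm_of_nonneg (by positivity : 0 ≤ (t / (1 + y * t)) ^ (k+2)), norm_neg,
      Real.norm_of_nonneg (by positivity : (0:ℝ) ≤ (k:ℝ)+1)]
    gcongr
    exact h2.trans h3
  · filter_upwards [ae_nonneg h] with t ht y hy
    have hy' : z/2 < y := hy
    have hy0 : 0 < y := by linarith
    have hne : 1 + y * t ≠ 0 := by positivity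
    have hd : HasDerivAt (fun y => t / (1 + y * t)) (-(t / (1 + y * t))^2) y := by
      have h1 : HasDerivAt (fun y : ℝ => 1 + y * t) t y := by
        simpa using ((hasDerivAt_id y).mul_const t).const_add 1
      have := (hasDerivAt_const y t).div h1 hne
      refine this.congr_deriv ?_
      field_simp
      ring
    have := hd.pow (k+1)
    refine this.congr_deriv ?_
    push_cast
    ring

/-- Taylor series of `∫ t/(1+zt) dτ`. -/
def gser (τ : Measure ℝ) (z : ℝ) : PowerSeries ℝ := PowerSeries.mk fun j => (-1)^j * A τ (j+1) z

lemma gser_isTaylor {τ : Measure ℝ} [IsProbabilityMeasure τ] (h : τ (Set.Iio (0:ℝ)) = 0) :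
    IsTaylor (gser τ) := by
  intro z hz j
  have h1 := (A_hasDerivAt h j hz).const_mul ((-1:ℝ)^j)
  simp only [gser, PowerSeries.coeff_mk, PowerSeries.coeff_derivative]
  refine h1.congr_deriv ?_
  push_cast
  ring

/-- rescaled series -/
def pser (τ : Measure ℝ) (z : ℝ) : PowerSeries ℝ := PowerSeries.rescale z (gser τ z)

/-- rescaled series, times `z` -/
def Pser (τ : Measure ℝ) (z : ℝ) : PowerSeries ℝ := PowerSeries.C z * pser τ z

lemma coeff_Pser (τ : Measure ℝ) (z : ℝ) (j : ℕ) :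
    PowerSeries.coeff j (Pser τ z) = (-1)^j * V τ (j+1) z := by
  simp only [Pser, pser, gser, PowerSeries.coeff_C_mul, PowerSeries.coeff_rescale, PowerSeries.coeff_mk, V_eq]
  ring

lemma coeff_pser (τ : Measure ℝ) {z : ℝ} (hz : 0 < z) (j : ℕ) :
    PowerSeries.coeff j (pser τ z) = (-1)^j * (V τ (j+1) z / z) := by
  simp only [pser, gser, PowerSeries.coeff_rescale, PowerSeries.coeff_mk, V_eq]
  field_simp
  try ring

/-- the multiplier series -/
def Kser (μ ν : Measure ℝ) (z : ℝ) : PowerSeries ℝ :=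
  (1 + PowerSeries.X) * Pser μ z + (PowerSeries.C z * (1 + PowerSeries.X)) * pser ν z
    - ((1 + PowerSeries.X) * Pser μ z) * pser ν z
    - (PowerSeries.C z * (1 + PowerSeries.X)) * (((1 + PowerSeries.X) * Pser μ z) * pser ν z)

lemma series_identity {μ ν ρ : Measure ℝ} [IsProbabilityMeasure μ] [IsProbabilityMeasure ν]
    [IsProbabilityMeasure ρ]
    (hμ : μ (Set.Iio (0 : ℝ)) = 0) (hν : ν (Set.Iio (0 : ℝ)) = 0)
    (hρ : ρ (Set.Iio (0 : ℝ)) = 0)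
    (hid : ∀ z : ℝ, 0 < z → (1 - z * A ρ 1 z) * (A μ 1 z * A ν 1 z) =
      A ρ 1 z * ((1 - z * A μ 1 z) * (1 - z * A ν 1 z))) :
    ∀ z : ℝ, 0 < z → Pser ρ z = Pser μ z * pser ν z + Pser ρ z * Kser μ ν z := by
  have T1 := gser_isTaylor hμ
  have T2 := gser_isTaylor hν
  have T3 := gser_isTaylor hρ
  have TZ := isTaylor_id
  have hT := T3.unique ((T1.mul T2).add (T3.mul ((((TZ.mul T1).add (TZ.mul T2)).sub
    ((TZ.mul T1).mul T2)).sub (TZ.mul ((TZ.mul T1).mul T2))))) (by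
      intro z hz
      have := hid z hz
      simp only [PowerSeries.coeff_zero_eq_constantCoeff, map_add, map_sub, map_mul,
        PowerSeries.constantCoeff_C, PowerSeries.constantCoeff_X]
      simp only [← PowerSeries.coeff_zero_eq_constantCoeff_apply, gser, PowerSeries.coeff_mk]
      simp only [pow_zero, one_mul, zero_add, add_zero]
      linarith)
  intro z hz
  have h := congrArg (fun F => PowerSeries.C z * PowerSeries.rescale z F) (hT z hz)
  simp only [map_add, map_sub, map_mul, PowerSeries.rescale_X] at h
  have hC : PowerSeries.rescale z (PowerSeries.C z) = PowerSeries.C z := by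
    ext j; simp [PowerSeries.coeff_rescale, PowerSeries.coeff_C]; split_ifs with hj <;> simp [hj]
  rw [hC] at h
  unfold Kser Pser pser
  linear_combination h

/-- hypotheses on weights -/
structure Wt (n : ℕ) (φ θ : ℝ → ℝ) : Prop where
  n_pos : 1 ≤ n
  φ0 : Tendsto φ (𝓝[>] 0) (𝓝 0)
  θ0 : Tendsto θ (𝓝[>] 0) (𝓝 0)
  hφθ : (fun z => φ z ^ n) =o[𝓝[>] 0] θ
  hθφ : θ =o[𝓝[>] 0] (fun z => φ z ^ (n-1))
  hz : (fun z : ℝ => z) =o[𝓝[>] 0] φ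

/-- weights -/
def w (n : ℕ) (φ θ : ℝ → ℝ) (a : ℕ) : ℝ → ℝ := fun z => if a < n then φ z ^ a else θ z

/-- weight class -/
def WC (n : ℕ) (φ θ : ℝ → ℝ) (a : ℕ) (f : ℝ → ℝ) : Prop :=
  f =O[𝓝[>] 0] w n φ θ a ∧ (a < n → f =o[𝓝[>] 0] w n φ θ a)

section
variable {n : ℕ} {φ θ : ℝ → ℝ}

lemma w_lt {a : ℕ} (h : a < n) : w n φ θ a = fun z => φ z ^ a := by
  funext z; simp [w, h]

lemma w_ge {a : ℕ} (h : n ≤ a) : w n φ θ a = θ := by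
  funext z; simp [w, not_lt.2 h]

lemma phi_pow_anti (H : Wt n φ θ) {a b : ℕ} (hab : a ≤ b) :
    (fun z => φ z ^ b) =O[𝓝[>] 0] (fun z => φ z ^ a) := by
  obtain ⟨c, rfl⟩ := Nat.exists_eq_add_of_le hab
  have h1 : (fun z => φ z ^ c) =O[𝓝[>] 0] (fun _ => (1:ℝ)) := (H.φ0.pow c).isBigO_one ℝ
  have := (isBigO_refl (fun z => φ z ^ a) (𝓝[>] 0)).mul h1
  simpa [pow_add] using this

lemma phi_pow_w (H : Wt n φ θ) (a : ℕ) : (fun z => φ z ^ a) =O[𝓝[>] 0] w n φ θ a := by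
  by_cases h : a < n
  · rw [w_lt h]
  · rw [w_ge (not_lt.1 h)]
    exact (phi_pow_anti H (not_lt.1 h)).trans H.hφθ.isBigO

lemma w_succ (H : Wt n φ θ) (a : ℕ) : w n φ θ (a+1) =O[𝓝[>] 0] w n φ θ a := by
  by_cases h : a + 1 < n
  · rw [w_lt h, w_lt (by omega)]; exact phi_pow_anti H (Nat.le_succ a)
  · by_cases h2 : a < n
    · rw [w_lt h2, w_ge (by omega)]
      have : a = n - 1 := by omega
      subst this
      exact H.hθφ.isBigO
    · rw [w_ge (by omega), w_ge (by omega)]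

lemma w_zero (H : Wt n φ θ) {a : ℕ} (ha : 1 ≤ a) : w n φ θ a =o[𝓝[>] 0] (fun _ => (1:ℝ)) := by
  rw [isLittleO_one_iff]
  by_cases h : a < n
  · rw [w_lt h]
    have := H.φ0.pow a
    rwa [zero_pow (by omega)] at this
  · rw [w_ge (not_lt.1 h)]; exact H.θ0

lemma WC.of_o {a : ℕ} {f : ℝ → ℝ} (h : f =o[𝓝[>] 0] w n φ θ a) : WC n φ θ a f :=
  ⟨h.isBigO, fun _ => h⟩

lemma WC.add {a : ℕ} {f g : ℝ → ℝ} (hf : WC n φ θ a f) (hg : WC n φ θ a g) :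
    WC n φ θ a (fun z => f z + g z) :=
  ⟨hf.1.add hg.1, fun h => (hf.2 h).add (hg.2 h)⟩

lemma WC.mul_bdd {a : ℕ} {f g : ℝ → ℝ} (hf : WC n φ θ a f) (hg : g =O[𝓝[>] 0] (fun _ => (1:ℝ))) :
    WC n φ θ a (fun z => f z * g z) :=
  ⟨by simpa using hf.1.mul hg, fun h => by simpa using (hf.2 h).mul_isBigO hg⟩

lemma WC.congr {a : ℕ} {f g : ℝ → ℝ} (hf : WC n φ θ a f) (hg : f =ᶠ[𝓝[>] 0] g) :
    WC n φ θ a g :=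
  ⟨hf.1.congr' hg EventuallyEq.rfl, fun h => (hf.2 h).congr' hg EventuallyEq.rfl⟩

lemma WC.succ (H : Wt n φ θ) {a : ℕ} {f : ℝ → ℝ} (hf : WC n φ θ (a+1) f) : WC n φ θ a f := by
  refine ⟨hf.1.trans (w_succ H a), fun h => ?_⟩
  by_cases h2 : a + 1 < n
  · exact (hf.2 h2).trans_isBigO (w_succ H a)
  · have h3 : a = n - 1 := by omega
    have h4 := hf.1
    rw [w_ge (by omega)] at h4
    rw [w_lt h, h3]
    exact h4.trans_isLittleO H.hθφ

lemma WC.mul (H : Wt n φ θ) {a b : ℕ} (ha : 1 ≤ a) (hb : 1 ≤ b) {f g : ℝ → ℝ}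
    (hf : WC n φ θ a f) (hg : WC n φ θ b g) :
    (fun z => f z * g z) =o[𝓝[>] 0] w n φ θ (a+b) := by
  by_cases h1 : a < n
  · by_cases h2 : b < n
    · have := (hf.2 h1).mul (hg.2 h2)
      rw [w_lt h1, w_lt h2] at this
      simp only [← pow_add] at this
      exact this.trans_isBigO (phi_pow_w H _)
    · have h3 := hg.1
      rw [w_ge (not_lt.1 h2)] at h3
      rw [w_ge (by omega)]
      simpa using (hf.1.trans_isLittleO (w_zero H ha)).mul_isBigO h3
  · have h3 := hf.1
    rw [w_ge (not_lt.1 h1)] at h3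
    rw [w_ge (by omega)]
    simpa using h3.mul_isLittleO (hg.1.trans_isLittleO (w_zero H hb))

/-- multipliers -/
def Mult (n : ℕ) (φ θ : ℝ → ℝ) (b : ℕ) (s : ℝ → ℝ) : Prop :=
  ∀ a : ℕ, 1 ≤ a → ∀ f : ℝ → ℝ, WC n φ θ a f → (fun z => f z * s z) =o[𝓝[>] 0] w n φ θ (a+b)

/-- multiplier series -/
def MS (n : ℕ) (φ θ : ℝ → ℝ) (F : ℝ → PowerSeries ℝ) : Prop :=
  (fun z => PowerSeries.coeff 0 (F z)) =O[𝓝[>] 0] (fun _ => (1:ℝ)) ∧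
  ∀ j : ℕ, 1 ≤ j → Mult n φ θ j (fun z => PowerSeries.coeff j (F z))

lemma MS.wc {F : ℝ → PowerSeries ℝ} (hF : MS n φ θ F) {a : ℕ} (ha : 1 ≤ a) {f : ℝ → ℝ}
    (hf : WC n φ θ a f) (j : ℕ) : WC n φ θ (a+j) (fun z => f z * PowerSeries.coeff j (F z)) := by
  rcases Nat.eq_zero_or_pos j with rfl | hj
  · exact hf.mul_bdd hF.1
  · exact WC.of_o (hF.2 j hj a ha f hf)

lemma MS.add {F G : ℝ → PowerSeries ℝ} (hF : MS n φ θ F) (hG : MS n φ θ G) :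
    MS n φ θ (fun z => F z + G z) := by
  refine ⟨?_, fun j hj a ha f hf => ?_⟩
  · simp only [map_add]; exact hF.1.add hG.1
  · simp only [map_add, mul_add]; exact (hF.2 j hj a ha f hf).add (hG.2 j hj a ha f hf)

lemma MS.sub {F G : ℝ → PowerSeries ℝ} (hF : MS n φ θ F) (hG : MS n φ θ G) :
    MS n φ θ (fun z => F z - G z) := by
  refine ⟨?_, fun j hj a ha f hf => ?_⟩
  · simp only [map_sub]; exact hF.1.sub hG.1
  · simp only [map_sub, mul_sub]; exact (hF.2 j hj a ha f hf).sub (hG.2 j hj a ha f hf)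

lemma MS.mul {F G : ℝ → PowerSeries ℝ} (hF : MS n φ θ F) (hG : MS n φ θ G) :
    MS n φ θ (fun z => F z * G z) := by
  refine ⟨?_, fun j hj a ha f hf => ?_⟩
  · have := hF.1.mul hG.1
    simpa using this
  · simp only [PowerSeries.coeff_mul, Finset.mul_sum]
    apply IsLittleO.fun_sum
    rintro ⟨c, d⟩ hcd
    rw [Finset.HasAntidiagonal.mem_antidiagonal] at hcd
    simp only at hcd ⊢
    simp only [← mul_assoc]
    rcases Nat.eq_zero_or_pos d with rfl | hd
    · have hc : c = j := by omega
      subst hc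
      simpa using (hF.2 c hj a ha f hf).mul_isBigO hG.1
    · have := hG.2 d hd (a+c) (by omega) _ (hF.wc ha hf c)
      rw [← hcd, ← add_assoc]
      exact this

lemma MS.ofP (H : Wt n φ θ) {F : ℝ → PowerSeries ℝ}
    (hF : ∀ j, WC n φ θ (j+1) (fun z => PowerSeries.coeff j (F z))) :
    MS n φ θ (fun z => (1 + PowerSeries.X) * F z) := by
  refine ⟨?_, fun j hj a ha f hf => ?_⟩
  · have := (hF 0).1.trans (w_zero H (a := 0+1) (by omega)).isBigO
    simpa using this
  · obtain ⟨i, rfl⟩ : ∃ i, j = i + 1 := ⟨j-1, by omega⟩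
    simp only [add_mul, one_mul, map_add, PowerSeries.coeff_succ_X_mul]
    exact hf.mul H ha (by omega) ((hF (i+1)).succ H |>.add (hF i))

lemma mult_z (H : Wt n φ θ) : Mult n φ θ 1 (fun z => z) := by
  intro a ha f hf
  by_cases h : a < n
  · have := (hf.2 h).mul H.hz
    rw [w_lt h] at this
    simp only [← pow_succ] at this
    exact this.trans_isBigO (phi_pow_w H _)
  · have h3 := hf.1
    rw [w_ge (not_lt.1 h)] at h3
    rw [w_ge (by omega)]
    have hz : (fun z : ℝ => z) =o[𝓝[>] 0] (fun _ => (1:ℝ)) := by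
      rw [isLittleO_one_iff]; exact tendsto_id.mono_left nhdsWithin_le_nhds
    simpa using h3.mul_isLittleO hz

lemma MS.z (H : Wt n φ θ) : MS n φ θ (fun z => PowerSeries.C z * (1 + PowerSeries.X)) := by
  refine ⟨?_, fun j hj => ?_⟩
  · have h0 : ∀ z : ℝ, PowerSeries.coeff 0 (PowerSeries.C z * (1 + PowerSeries.X) : PowerSeries ℝ) = z := by
      intro z; simp
    simp only [h0]
    exact (tendsto_id.mono_left nhdsWithin_le_nhds : Tendsto (fun z : ℝ => z) (𝓝[>] 0) (𝓝 0)).isBigO_one ℝ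
  · by_cases h : j = 1
    · subst h
      simpa [PowerSeries.coeff_C_mul, PowerSeries.coeff_one] using mult_z H
    · intro a ha f hf
      simp [PowerSeries.coeff_C_mul, PowerSeries.coeff_one, PowerSeries.coeff_X, h, show j ≠ 0 by omega]

lemma main_induction {P p Q K : ℝ → PowerSeries ℝ} {m : ℝ}
    (hP : ∀ j, WC n φ θ (j+1) (fun z => PowerSeries.coeff j (P z)))
    (hp : MS n φ θ p) (hpm : Tendsto (fun z => PowerSeries.coeff 0 (p z)) (𝓝[>] 0) (𝓝 m))
    (hK : MS n φ θ K) (hK0 : Tendsto (fun z => PowerSeries.coeff 0 (K z)) (𝓝[>] 0) (𝓝 0))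
    (hQ : ∀ z : ℝ, 0 < z → Q z = P z * p z + Q z * K z) (j : ℕ) :
    WC n φ θ (j+1) (fun z => PowerSeries.coeff j (Q z)) ∧
    (fun z => PowerSeries.coeff j (Q z) - m * PowerSeries.coeff j (P z)) =o[𝓝[>] 0] w n φ θ (j+1) := by
  induction j using Nat.strong_induction_on with
  | _ j ih =>
  -- the remainder
  set T : ℝ → ℝ := fun z => (PowerSeries.coeff j (P z * p z) - PowerSeries.coeff j (P z) * PowerSeries.coeff 0 (p z))
    + (PowerSeries.coeff j (Q z * K z) - PowerSeries.coeff j (Q z) * PowerSeries.coeff 0 (K z)) with hT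
  have split : ∀ F G : PowerSeries ℝ, PowerSeries.coeff j (F * G) - PowerSeries.coeff j F * PowerSeries.coeff 0 G
      = ∑ i ∈ Finset.range j, PowerSeries.coeff i F * PowerSeries.coeff (j - i) G := by
    intro F G
    rw [PowerSeries.coeff_mul, Finset.Nat.sum_antidiagonal_eq_sum_range_succ_mk, Finset.sum_range_succ]
    simp
  have small : ∀ F G : ℝ → PowerSeries ℝ, MS n φ θ G →
      (∀ i < j, WC n φ θ (i+1) (fun z => PowerSeries.coeff i (F z))) →
      (fun z => PowerSeries.coeff j (F z * G z) - PowerSeries.coeff j (F z) * PowerSeries.coeff 0 (G z))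
        =o[𝓝[>] 0] w n φ θ (j+1) := by
    intro F G hG hF
    simp only [split]
    apply IsLittleO.fun_sum
    intro i hi
    rw [Finset.mem_range] at hi
    have := hG.2 (j-i) (by omega) (i+1) (by omega) _ (hF i hi)
    rwa [show i + 1 + (j - i) = j + 1 by omega] at this
  have hTo : T =o[𝓝[>] 0] w n φ θ (j+1) :=
    (small P p hp (fun i _ => hP i)).add (small Q K hK (fun i hi => (ih i hi).1))
  have hinv : Tendsto (fun z => (1 - PowerSeries.coeff 0 (K z))⁻¹) (𝓝[>] 0) (𝓝 1) := by
    simpa using (hK0.const_sub 1).inv₀ (by simp)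
  have hne : ∀ᶠ z in 𝓝[>] (0:ℝ), 1 - PowerSeries.coeff 0 (K z) ≠ 0 := by
    have : Tendsto (fun z => 1 - PowerSeries.coeff 0 (K z)) (𝓝[>] 0) (𝓝 (1 - 0)) := hK0.const_sub 1
    exact this.eventually_ne (by norm_num)
  have heq : (fun z => (PowerSeries.coeff j (P z) * (PowerSeries.coeff 0 (p z) * (1 - PowerSeries.coeff 0 (K z))⁻¹ - m) +
      T z * (1 - PowerSeries.coeff 0 (K z))⁻¹)) =ᶠ[𝓝[>] 0]
      (fun z => PowerSeries.coeff j (Q z) - m * PowerSeries.coeff j (P z)) := by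
    filter_upwards [hne, self_mem_nhdsWithin] with z hz hz0
    have h1 := congrArg (PowerSeries.coeff j) (hQ z hz0)
    rw [map_add] at h1
    have h2 : PowerSeries.coeff j (Q z) * (1 - PowerSeries.coeff 0 (K z)) =
      PowerSeries.coeff j (P z) * PowerSeries.coeff 0 (p z) + T z := by
      simp only [hT]; linarith
    have h3 : PowerSeries.coeff j (Q z) = (PowerSeries.coeff j (P z) * PowerSeries.coeff 0 (p z) + T z) *
        (1 - PowerSeries.coeff 0 (K z))⁻¹ := by
      rw [← h2, mul_assoc, mul_inv_cancel₀ hz, mul_one]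
    rw [h3]; ring
  have hs : (fun z => PowerSeries.coeff 0 (p z) * (1 - PowerSeries.coeff 0 (K z))⁻¹ - m) =o[𝓝[>] 0] (fun _ => (1:ℝ)) := by
    rw [isLittleO_one_iff]
    simpa using (hpm.mul hinv).sub_const m
  have h1 : (fun z => PowerSeries.coeff j (Q z) - m * PowerSeries.coeff j (P z)) =o[𝓝[>] 0] w n φ θ (j+1) := by
    refine IsLittleO.congr' ?_ heq EventuallyEq.rfl
    refine IsLittleO.add ?_ ?_
    · simpa using (hP j).1.mul_isLittleO hs
    · simpa using hTo.mul_isBigO (hinv.isBigO_one ℝ)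
  refine ⟨?_, h1⟩
  have h2 := (WC.of_o h1).add ((hP j).mul_bdd (g := fun _ => m) (isBigO_const_const _ one_ne_zero _))
  refine h2.congr (Eventually.of_forall fun z => ?_)
  ring

end

lemma dyadic {P : ℝ → Prop} {x0 : ℝ} (hx0 : 0 < x0) (h0 : ∀ x, x0 ≤ x → x ≤ 2 * x0 → P x)
    (hs : ∀ x, x0 ≤ x → P x → P (2 * x)) : ∀ x, x0 ≤ x → P x := by
  have key : ∀ k : ℕ, ∀ x, x0 ≤ x → x ≤ 2 ^ k * x0 → P x := by
    intro k
    induction k with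
    | zero => intro x h1 h2; exact h0 x h1 (by simp at h2; linarith)
    | succ k ih =>
      intro x h1 h2
      by_cases h3 : x ≤ 2 * x0
      · exact h0 x h1 h3
      · have := hs (x/2) (by linarith) (ih (x/2) (by linarith) (by rw [pow_succ] at h2; linarith))
        rwa [mul_div_cancel₀ _ (two_ne_zero)] at this
  intro x hx
  obtain ⟨k, hk⟩ := pow_unbounded_of_one_lt (x / x0) (by norm_num : (1:ℝ) < 2)
  exact key k x hx (by rw [div_lt_iff₀ hx0] at hk; exact hk.le)

/-- tail -/
def Tl (τ : Measure ℝ) (x : ℝ) : ℝ := (τ (Set.Ioi x)).toReal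

lemma Tl_anti (τ : Measure ℝ) [IsProbabilityMeasure τ] : Antitone (Tl τ) := by
  intro x y h
  exact ENNReal.toReal_mono (measure_ne_top _ _) (measure_mono (Set.Ioi_subset_Ioi h))

lemma Tl_nonneg (τ : Measure ℝ) (x : ℝ) : 0 ≤ Tl τ x := ENNReal.toReal_nonneg

lemma Tl_le_one (τ : Measure ℝ) [IsProbabilityMeasure τ] (x : ℝ) : Tl τ x ≤ 1 := by
  have := ENNReal.toReal_mono ENNReal.one_ne_top (prob_le_one (μ := τ) (s := Set.Ioi x))
  simpa [Tl] using this

lemma Tl_pos {τ : Measure ℝ} [IsProbabilityMeasure τ] {α : ℝ} (h : RegVarTail τ α) {x : ℝ} (hx : 0 ≤ x) :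
    0 < Tl τ x := ENNReal.toReal_pos (h.1 x hx).ne' (measure_ne_top _ _)

lemma two_step_lower {τ : Measure ℝ} [IsProbabilityMeasure τ] {α : ℝ} (h : RegVarTail τ α) {s : ℝ}
    (hs : α < s) : ∃ x0 : ℝ, 0 < x0 ∧ ∀ x, x0 ≤ x → Tl τ x ≤ 2 ^ s * Tl τ (2 * x) := by
  have h1 := h.2 2 two_pos
  have h2 : (2:ℝ) ^ (-s) < 2 ^ (-α) := Real.rpow_lt_rpow_of_exponent_lt (by norm_num) (by linarith)
  obtain ⟨x0, hx0⟩ := ((h1.eventually (lt_mem_nhds h2)).and (eventually_gt_atTop 0)).exists_forall_of_atTop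
  refine ⟨x0, (hx0 x0 le_rfl).2, fun x hx => ?_⟩
  obtain ⟨h3, h4⟩ := hx0 x hx
  have h5 : 0 < Tl τ x := Tl_pos h h4.le
  change _ < Tl τ (2 * x) / Tl τ x at h3
  rw [lt_div_iff₀ h5, Real.rpow_neg (by norm_num), inv_mul_lt_iff₀ (by positivity)] at h3
  exact h3.le

lemma two_step_upper {τ : Measure ℝ} [IsProbabilityMeasure τ] {α : ℝ} (h : RegVarTail τ α) {s : ℝ}
    (hs : s < α) : ∃ x0 : ℝ, 0 < x0 ∧ ∀ x, x0 ≤ x → 2 ^ s * Tl τ (2 * x) ≤ Tl τ x := by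
  have h1 := h.2 2 two_pos
  have h2 : (2:ℝ) ^ (-α) < 2 ^ (-s) := Real.rpow_lt_rpow_of_exponent_lt (by norm_num) (by linarith)
  obtain ⟨x0, hx0⟩ := ((h1.eventually (gt_mem_nhds h2)).and (eventually_gt_atTop 0)).exists_forall_of_atTop
  refine ⟨x0, (hx0 x0 le_rfl).2, fun x hx => ?_⟩
  obtain ⟨h3, h4⟩ := hx0 x hx
  have h5 : 0 < Tl τ x := Tl_pos h h4.le
  change Tl τ (2 * x) / Tl τ x < _ at h3
  rw [div_lt_iff₀ h5, Real.rpow_neg (by norm_num), lt_inv_mul_iff₀ (by positivity)] at h3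
  exact h3.le

lemma tail_lower {τ : Measure ℝ} [IsProbabilityMeasure τ] {α : ℝ} (h : RegVarTail τ α) {s : ℝ}
    (hs : α < s) (hs0 : 0 ≤ s) : ∃ c : ℝ, 0 < c ∧ ∀ᶠ x in atTop, c * x ^ (-s) ≤ Tl τ x := by
  obtain ⟨x0, hx0, H⟩ := two_step_lower h hs
  refine ⟨x0 ^ s * Tl τ (2 * x0), mul_pos (by positivity) (Tl_pos h (by linarith)), ?_⟩
  have key := dyadic (P := fun x => x0 ^ s * Tl τ (2 * x0) ≤ x ^ s * Tl τ x) hx0 ?_ ?_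
  · filter_upwards [eventually_ge_atTop x0] with x hx
    have hx' : 0 < x := by linarith
    rw [Real.rpow_neg hx'.le, ← div_eq_mul_inv, div_le_iff₀ (by positivity), mul_comm (Tl τ x)]
    exact key x hx
  · intro x h1 h2
    exact mul_le_mul (Real.rpow_le_rpow hx0.le h1 hs0) (Tl_anti τ h2) (Tl_nonneg _ _)
      (Real.rpow_nonneg (by linarith) _)
  · intro x h1 h2
    refine h2.trans ?_
    rw [Real.mul_rpow (by norm_num) (by linarith), mul_comm ((2:ℝ)^s), mul_assoc]
    exact mul_le_mul_of_nonneg_left (H x h1) (Real.rpow_nonneg (by linarith) _)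

lemma tail_upper {τ : Measure ℝ} [IsProbabilityMeasure τ] {α : ℝ} (h : RegVarTail τ α) {s : ℝ}
    (hs : s < α) (hs0 : 0 ≤ s) : ∃ C : ℝ, 0 < C ∧ ∀ᶠ x in atTop, Tl τ x ≤ C * x ^ (-s) := by
  obtain ⟨x0, hx0, H⟩ := two_step_upper h hs
  refine ⟨(2 * x0) ^ s, by positivity, ?_⟩
  have key := dyadic (P := fun x => x ^ s * Tl τ x ≤ (2 * x0) ^ s) hx0 ?_ ?_
  · filter_upwards [eventually_ge_atTop x0] with x hx
    have hx' : 0 < x := by linarith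
    rw [Real.rpow_neg hx'.le, ← div_eq_mul_inv, le_div_iff₀ (by positivity), mul_comm (Tl τ x)]
    exact key x hx
  · intro x h1 h2
    have hx' : 0 < x := by linarith
    have := mul_le_mul (Real.rpow_le_rpow hx'.le h2 hs0) (Tl_le_one τ x) (Tl_nonneg _ _)
      (Real.rpow_nonneg (by linarith) _)
    simpa using this
  · intro x h1 h2
    refine le_trans ?_ h2
    rw [Real.mul_rpow (by norm_num) (by linarith), mul_comm ((2:ℝ)^s), mul_assoc]
    exact mul_le_mul_of_nonneg_left (H x h1) (Real.rpow_nonneg (by linarith) _)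

/-- `∫ min(1,t/x)^k`. -/
def Wm (τ : Measure ℝ) (k : ℕ) (x : ℝ) : ℝ := ∫ t, (min 1 (t / x)) ^ k ∂τ

lemma Wm_integrable {τ : Measure ℝ} [IsProbabilityMeasure τ] (h : τ (Set.Iio (0:ℝ)) = 0) (k : ℕ)
    {x : ℝ} (hx : 0 < x) : Integrable (fun t : ℝ => (min 1 (t / x)) ^ k) τ := by
  refine Integrable.mono' (integrable_const (1:ℝ)) (Measurable.aestronglyMeasurable (by fun_prop)) ?_
  filter_upwards [ae_nonneg h] with t ht
  have h1 : 0 ≤ min 1 (t / x) := le_min zero_le_one (by positivity)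
  rw [Real.norm_of_nonneg (by positivity)]
  exact pow_le_one₀ h1 (min_le_left _ _)

lemma Wm_le_one {τ : Measure ℝ} [IsProbabilityMeasure τ] (h : τ (Set.Iio (0:ℝ)) = 0) (k : ℕ)
    {x : ℝ} (hx : 0 < x) : Wm τ k x ≤ 1 := by
  have : Wm τ k x ≤ ∫ t, (1:ℝ) ∂τ := by
    refine integral_mono_ae (Wm_integrable h k hx) (integrable_const _) ?_
    filter_upwards [ae_nonneg h] with t ht
    have h1 : 0 ≤ min 1 (t / x) := le_min zero_le_one (by positivity)
    exact pow_le_one₀ h1 (min_le_left _ _)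
  simpa using this

lemma V_le_Wm {τ : Measure ℝ} [IsProbabilityMeasure τ] (h : τ (Set.Iio (0:ℝ)) = 0) (k : ℕ)
    {z : ℝ} (hz : 0 < z) : V τ k z ≤ Wm τ k z⁻¹ := by
  refine integral_mono_ae (V_integrable h k hz) (Wm_integrable h k (by positivity)) ?_
  filter_upwards [ae_nonneg h] with t ht
  obtain ⟨h1, h2⟩ := v_bd hz ht
  refine pow_le_pow_left₀ h1 (le_min h2 ?_) k
  rw [div_inv_eq_mul, mul_comm t]
  exact div_le_self (by positivity) (by have : 0 ≤ z * t := by positivity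
                                        linarith)

lemma V_nonneg {τ : Measure ℝ} (h : τ (Set.Iio (0:ℝ)) = 0) (k : ℕ)
    {z : ℝ} (hz : 0 < z) : 0 ≤ V τ k z := by
  refine integral_nonneg_of_ae ?_
  filter_upwards [ae_nonneg h] with t ht
  exact pow_nonneg (v_bd hz ht).1 k

lemma Wm_step {τ : Measure ℝ} [IsProbabilityMeasure τ] (h : τ (Set.Iio (0:ℝ)) = 0) (k : ℕ)
    {x : ℝ} (hx : 0 < x) : Wm τ k (2 * x) ≤ (1/2)^k * Wm τ k x + Tl τ x := by
  have h1 : Tl τ x = ∫ t, (Set.Ioi x).indicator (fun _ => (1:ℝ)) t ∂τ := by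
    rw [integral_indicator measurableSet_Ioi]; simp [Tl, Measure.real]
  have hint : Integrable ((Set.Ioi x).indicator (fun _ => (1:ℝ))) τ :=
    (integrable_const _).indicator measurableSet_Ioi
  rw [h1, Wm, Wm, ← integral_const_mul, ← integral_add ((Wm_integrable h k hx).const_mul _) hint]
  refine integral_mono_ae (Wm_integrable h k (by positivity))
    (((Wm_integrable h k hx).const_mul _).add hint) ?_
  filter_upwards [ae_nonneg h] with t ht
  have p0 : 0 ≤ min 1 (t / (2 * x)) := le_min zero_le_one (by positivity)
  have p1 : 0 ≤ min 1 (t / x) := le_min zero_le_one (by positivity)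
  by_cases htx : x < t
  · rw [Set.indicator_of_mem (show t ∈ Set.Ioi x from htx)]
    have := pow_le_one₀ (n := k) p0 (min_le_left _ _)
    have : 0 ≤ (1/2:ℝ)^k * (min 1 (t / x)) ^ k := by positivity
    linarith
  · rw [Set.indicator_of_notMem (show t ∉ Set.Ioi x from htx), add_zero, ← mul_pow]
    refine pow_le_pow_left₀ p0 ?_ k
    have h3 : t / x ≤ 1 := by rw [div_le_one hx]; linarith
    rw [min_eq_right h3]
    refine (min_le_right _ _).trans (le_of_eq ?_)
    field_simp

lemma Wm_bound {τ : Measure ℝ} [IsProbabilityMeasure τ] (h : τ (Set.Iio (0:ℝ)) = 0) (k : ℕ)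
    {b : ℝ → ℝ} {x0 C L b0 : ℝ} (hx0 : 0 < x0) (hL : (1/2)^k * L < 1) (hC : 0 ≤ C) (hb0 : 0 < b0)
    (hT : ∀ x, x0 ≤ x → Tl τ x ≤ C * b x) (hb : ∀ x, x0 ≤ x → b x ≤ L * b (2 * x))
    (hb1 : ∀ x, x0 ≤ x → x ≤ 2 * x0 → b0 ≤ b x)  (hbp : ∀ x, x0 ≤ x → 0 ≤ b x) :
    ∃ M : ℝ, ∀ x, x0 ≤ x → Wm τ k x ≤ M * b x := by
  set M := max (1 / b0) (C * L / (1 - (1/2)^k * L)) with hM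
  have hM1 : 1 ≤ M * b0 := by rw [← div_le_iff₀ hb0]; exact le_max_left _ _
  have hM2 : C * L ≤ M * (1 - (1/2)^k * L) := by
    rw [← div_le_iff₀ (by linarith)]; exact le_max_right _ _
  have hM0 : 0 ≤ M := le_trans (by positivity) (le_max_left _ _)
  refine ⟨M, dyadic hx0 ?_ ?_⟩
  · intro x h1 h2
    refine (Wm_le_one h k (by linarith)).trans (hM1.trans ?_)
    exact mul_le_mul_of_nonneg_left (hb1 x h1 h2) hM0
  · intro x h1 h2
    have s1 := Wm_step h k (show 0 < x by linarith)
    have s2 : (1/2:ℝ)^k * Wm τ k x ≤ (1/2)^k * (M * b x) := by gcongr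
    have s3 := hT x h1
    have s4 : ((1/2:ℝ)^k * M + C) * b x ≤ ((1/2:ℝ)^k * M + C) * (L * b (2 * x)) :=
      mul_le_mul_of_nonneg_left (hb x h1) (by positivity)
    have s5 : 0 ≤ b (2 * x) := hbp _ (by linarith)
    have s6 : ((1/2:ℝ)^k * M + C) * L ≤ M := by linarith
    have s7 := mul_le_mul_of_nonneg_right s6 s5
    linarith

lemma V_isBigO_of_Wm {τ : Measure ℝ} [IsProbabilityMeasure τ] (h : τ (Set.Iio (0:ℝ)) = 0) (k : ℕ)
    {b : ℝ → ℝ} (hW : ∃ M x0 : ℝ, ∀ x, x0 ≤ x → Wm τ k x ≤ M * b x) :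
    V τ k =O[𝓝[>] 0] (fun z => b z⁻¹) := by
  obtain ⟨M, x0, hW⟩ := hW
  refine IsBigO.of_bound |M| ?_
  filter_upwards [self_mem_nhdsWithin, tendsto_inv_nhdsGT_zero.eventually (eventually_ge_atTop x0)] with z hz hzx
  rw [Real.norm_of_nonneg (V_nonneg h k hz), Real.norm_eq_abs, ← abs_mul]
  exact (V_le_Wm h k hz).trans ((hW _ hzx).trans (le_abs_self _))

lemma half_pow_lt {k : ℕ} {s : ℝ} (hs : s < k) : (1/2:ℝ)^k * 2 ^ s < 1 := by
  rw [one_div, inv_pow, ← Real.rpow_natCast, ← Real.rpow_neg (by norm_num), ← Real.rpow_add (by norm_num)]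
  exact Real.rpow_lt_one_of_one_lt_of_neg (by norm_num) (by linarith)

lemma V_isBigO_theta {τ : Measure ℝ} [IsProbabilityMeasure τ] (h : τ (Set.Iio (0:ℝ)) = 0) {α : ℝ}
    (hreg : RegVarTail τ α) {k : ℕ} (hk : α < k) : V τ k =O[𝓝[>] 0] (fun z => Tl τ z⁻¹) := by
  obtain ⟨s, hs1, hs2⟩ := exists_between hk
  obtain ⟨x0, hx0, H⟩ := two_step_lower hreg hs1
  apply V_isBigO_of_Wm h k
  obtain ⟨M, hM⟩ := Wm_bound h k (b := Tl τ) (C := 1) (L := 2 ^ s) (b0 := Tl τ (2 * x0)) hx0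
    (half_pow_lt hs2) zero_le_one (Tl_pos hreg (by linarith)) (fun x _ => by simp) H
    (fun x _ h2 => Tl_anti τ h2) (fun x _ => Tl_nonneg _ _)
  exact ⟨M, x0, hM⟩

lemma V_isBigO_rpow {τ : Measure ℝ} [IsProbabilityMeasure τ] (h : τ (Set.Iio (0:ℝ)) = 0) {α : ℝ}
    (hreg : RegVarTail τ α) {k : ℕ} {s : ℝ} (hs : s < α) (hs0 : 0 ≤ s) (hk : s < k) :
    V τ k =O[𝓝[>] 0] (fun z => z ^ s) := by
  obtain ⟨C, hC, H⟩ := tail_upper hreg hs hs0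
  obtain ⟨x0, hx0⟩ := (H.and (eventually_gt_atTop 0)).exists_forall_of_atTop
  have hx00 := (hx0 x0 le_rfl).2
  have key : V τ k =O[𝓝[>] 0] (fun z => (z⁻¹) ^ (-s)) := by
    apply V_isBigO_of_Wm h k (b := fun x => x ^ (-s))
    obtain ⟨M, hM⟩ := Wm_bound h k (b := fun x => x ^ (-s)) (C := C) (L := 2 ^ s) (b0 := (2 * x0) ^ (-s)) hx00
      (half_pow_lt hk) hC.le (by positivity) (fun x hx => (hx0 x hx).1)
      (fun x hx => by
        have : 0 < x := (hx0 x hx).2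
        rw [Real.mul_rpow (by norm_num) this.le, ← mul_assoc, ← Real.rpow_add (by norm_num)]
        simp)
      (fun x h1 h2 => Real.rpow_le_rpow_of_nonpos (by linarith) h2 (by linarith))
      (fun x hx => Real.rpow_nonneg (by linarith) _)
    exact ⟨M, x0, hM⟩
  refine key.congr' EventuallyEq.rfl ?_
  filter_upwards [self_mem_nhdsWithin] with z hz
  have hz' : (0:ℝ) < z := hz
  rw [Real.inv_rpow hz'.le, Real.rpow_neg hz'.le, inv_inv]

lemma rpow_isBigO_theta {τ : Measure ℝ} [IsProbabilityMeasure τ] {α : ℝ}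
    (hreg : RegVarTail τ α) {s : ℝ} (hs : α < s) (hs0 : 0 ≤ s) :
    (fun z : ℝ => z ^ s) =O[𝓝[>] 0] (fun z => Tl τ z⁻¹) := by
  obtain ⟨c, hc, H⟩ := tail_lower hreg hs hs0
  refine IsBigO.of_bound c⁻¹ ?_
  filter_upwards [self_mem_nhdsWithin, tendsto_inv_nhdsGT_zero.eventually H] with z hz hzx
  have hz' : (0:ℝ) < z := hz
  rw [Real.inv_rpow hz'.le, Real.rpow_neg hz'.le, inv_inv] at hzx
  rw [Real.norm_of_nonneg (Real.rpow_nonneg hz'.le _), Real.norm_of_nonneg (Tl_nonneg _ _),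
    le_inv_mul_iff₀ hc]
  exact hzx

lemma theta_isBigO_rpow {τ : Measure ℝ} [IsProbabilityMeasure τ] {α : ℝ}
    (hreg : RegVarTail τ α) {s : ℝ} (hs : s < α) (hs0 : 0 ≤ s) :
    (fun z => Tl τ z⁻¹) =O[𝓝[>] 0] (fun z : ℝ => z ^ s) := by
  obtain ⟨c, hc, H⟩ := tail_upper hreg hs hs0
  refine IsBigO.of_bound c ?_
  filter_upwards [self_mem_nhdsWithin, tendsto_inv_nhdsGT_zero.eventually H] with z hz hzx
  have hz' : (0:ℝ) < z := hz
  rw [Real.inv_rpow hz'.le, Real.rpow_neg hz'.le, inv_inv] at hzx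
  rwa [Real.norm_of_nonneg (Real.rpow_nonneg hz'.le _), Real.norm_of_nonneg (Tl_nonneg _ _)]

lemma rpow_isLittleO {a b : ℝ} (hab : a < b) :
    (fun z : ℝ => z ^ b) =o[𝓝[>] 0] (fun z : ℝ => z ^ a) := by
  have h1 : Tendsto (fun z : ℝ => z ^ (b - a)) (𝓝[>] 0) (𝓝 0) := by
    have := (Real.continuousAt_rpow_const 0 (b - a) (Or.inr (by linarith))).tendsto
    rw [Real.zero_rpow (by linarith)] at this
    exact this.mono_left nhdsWithin_le_nhds
  have h2 := (isBigO_refl (fun z : ℝ => z ^ a) (𝓝[>] 0)).mul_isLittleO ((isLittleO_one_iff ℝ).2 h1)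
  simp only [mul_one] at h2
  refine h2.congr' ?_ EventuallyEq.rfl
  filter_upwards [self_mem_nhdsWithin] with z hz
  have hz' : (0:ℝ) < z := hz
  rw [← Real.rpow_add hz']; congr 1; ring

lemma theta_tendsto (τ : Measure ℝ) [IsProbabilityMeasure τ] :
    Tendsto (fun z => Tl τ z⁻¹) (𝓝[>] 0) (𝓝 0) := by
  have h : Tendsto (Tl τ) atTop (𝓝 0) := by
    have h1 := tendsto_measure_iInter_atTop (μ := τ) (s := fun x : ℝ => Set.Ioi x)
      (fun x => measurableSet_Ioi.nullMeasurableSet) (fun x y hxy => Set.Ioi_subset_Ioi hxy)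
      ⟨0, measure_ne_top _ _⟩
    have h2 : ⋂ x : ℝ, Set.Ioi x = ∅ := by
      ext y; simp; exact ⟨y, le_rfl⟩
    rw [h2, measure_empty] at h1
    have := (ENNReal.tendsto_toReal ENNReal.zero_ne_top).comp h1
    rw [ENNReal.toReal_zero] at this
    exact this
  exact h.comp tendsto_inv_nhdsGT_zero

lemma V_tendsto_zero {τ : Measure ℝ} [IsProbabilityMeasure τ] (h : τ (Set.Iio (0:ℝ)) = 0) {k : ℕ}
    (hk : 1 ≤ k) : Tendsto (V τ k) (𝓝[>] 0) (𝓝 0) := by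
  have := tendsto_integral_filter_of_dominated_convergence (μ := τ) (l := 𝓝[>] (0:ℝ))
    (F := fun z t => (z * t / (1 + z * t)) ^ k) (f := fun _ => (0:ℝ)) (fun _ => (1:ℝ))
    (Eventually.of_forall fun z => Measurable.aestronglyMeasurable (by fun_prop)) ?_ (integrable_const _) ?_
  · rw [integral_zero] at this
    exact this
  · filter_upwards [self_mem_nhdsWithin] with z hz
    filter_upwards [ae_nonneg h] with t ht
    obtain ⟨h1, h2⟩ := v_bd hz ht
    rw [Real.norm_of_nonneg (by positivity)]
    exact pow_le_one₀ h1 h2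
  · refine Eventually.of_forall fun t => ?_
    have : ContinuousAt (fun z : ℝ => (z * t / (1 + z * t)) ^ k) 0 := by
      refine ContinuousAt.pow (ContinuousAt.div (by fun_prop) (by fun_prop) (by simp)) k
    have h2 := this.tendsto
    simp only [zero_mul, zero_div, zero_pow (show k ≠ 0 by omega)] at h2
    exact h2.mono_left nhdsWithin_le_nhds

lemma V_div_tendsto {τ : Measure ℝ} [IsProbabilityMeasure τ] (h : τ (Set.Iio (0:ℝ)) = 0)
    (hm : Integrable (fun x : ℝ => x) τ) (j : ℕ) :
    Tendsto (fun z => V τ (j+1) z / z) (𝓝[>] 0) (𝓝 ((∫ x, x ∂τ) * 0 ^ j)) := by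
  have := tendsto_integral_filter_of_dominated_convergence (μ := τ) (l := 𝓝[>] (0:ℝ))
    (F := fun z t => (t / (1 + z * t)) * (z * t / (1 + z * t)) ^ j) (f := fun t => t * 0 ^ j) (fun t => |t|)
    (Eventually.of_forall fun z => Measurable.aestronglyMeasurable (by fun_prop)) ?_ hm.abs ?_
  · rw [integral_mul_const] at this
    refine this.congr' ?_
    filter_upwards [self_mem_nhdsWithin] with z hz
    have hz' : (0:ℝ) < z := hz
    rw [V, ← integral_div]
    congr 1; funext t
    have e : z*t/(1+z*t)/z = t/(1+z*t) := by field_simp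
    rw [pow_succ, mul_div_assoc ((z*t/(1+z*t))^j), e, mul_comm]
  · filter_upwards [self_mem_nhdsWithin] with z hz
    have hz' : (0:ℝ) < z := hz
    filter_upwards [ae_nonneg h] with t ht
    obtain ⟨h1, h2⟩ := v_bd hz ht
    have h3 : t / (1 + z * t) ≤ t := div_le_self ht (by have : 0 ≤ z * t := by positivity
                                                        linarith)
    have h4 : 0 ≤ t / (1 + z * t) := by positivity
    rw [Real.norm_of_nonneg (by positivity), abs_of_nonneg ht]
    calc _ ≤ t * 1 := mul_le_mul h3 (pow_le_one₀ h1 h2) (by positivity) ht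
      _ = t := mul_one t
  · refine Eventually.of_forall fun t => ?_
    have : ContinuousAt (fun z : ℝ => (t / (1 + z * t)) * (z * t / (1 + z * t)) ^ j) 0 := by
      refine ContinuousAt.mul (ContinuousAt.div (by fun_prop) (by fun_prop) (by simp)) ?_
      refine ContinuousAt.pow (ContinuousAt.div (by fun_prop) (by fun_prop) (by simp)) j
    have h2 := this.tendsto
    simp only [zero_mul, zero_div, add_zero, div_one] at h2
    exact h2.mono_left nhdsWithin_le_nhds

lemma rpow_pow_eq (e : ℝ) (k : ℕ) :
    (fun z : ℝ => z ^ (e * k)) =ᶠ[𝓝[>] 0] (fun z : ℝ => (z ^ e) ^ k) := by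
  filter_upwards [self_mem_nhdsWithin] with z hz
  have hz' : (0:ℝ) < z := hz
  rw [Real.rpow_mul hz'.le, Real.rpow_natCast]

lemma key_asymp (α β : ℝ) (hα : 0 ≤ α) (hαβ : α < β)
    (μ ν ρ : Measure ℝ)
    [IsProbabilityMeasure μ] [IsProbabilityMeasure ν] [IsProbabilityMeasure ρ]
    (hμ : μ (Set.Iio (0 : ℝ)) = 0) (hν : ν (Set.Iio (0 : ℝ)) = 0)
    (hρ : ρ (Set.Iio (0 : ℝ)) = 0)
    (hregμ : RegVarTail μ α) (hregν : RegVarTail ν β)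
    (hmean : Integrable (fun x : ℝ => x) ν)
    (hid : ∀ z : ℝ, 0 < z → (1 - z * A ρ 1 z) * (A μ 1 z * A ν 1 z) =
      A ρ 1 z * ((1 - z * A μ 1 z) * (1 - z * A ν 1 z))) :
    ∃ n : ℕ, V μ n =O[𝓝[>] 0] (fun z => Tl μ z⁻¹) ∧ ∀ k : ℕ, n ≤ k →
      (fun z => V ρ k z - (∫ x, x ∂ν) * V μ k z) =o[𝓝[>] 0] (fun z => Tl μ z⁻¹) := by
  obtain ⟨N, hN⟩ : ∃ N, N = ⌊α⌋₊ := ⟨_, rfl⟩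
  have hN1 : (N:ℝ) ≤ α := hN ▸ Nat.floor_le hα
  have hN2 : α < (N:ℝ) + 1 := hN ▸ Nat.lt_floor_add_one α
  set n := N + 1 with hn
  have hnα : α < (n:ℝ) := by rw [hn]; push_cast; exact hN2
  have hn0 : (0:ℝ) < n := by linarith
  obtain ⟨ε, hε0, hε⟩ := exists_between (show (0:ℝ) < min (min (n - α) (β - α)) (min (((n:ℝ) - α)/n) 1) from
    lt_min (lt_min (by linarith) (by linarith)) (lt_min (div_pos (by linarith) hn0) one_pos))
  rw [lt_min_iff, lt_min_iff, lt_min_iff, lt_div_iff₀ hn0] at hε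
  obtain ⟨⟨hε1, hε2⟩, hε3, hε4⟩ := hε
  set m := ∫ x, x ∂ν with hm
  set φ : ℝ → ℝ := fun z => z ^ (1 - ε) with hφ
  set θ : ℝ → ℝ := fun z => Tl μ z⁻¹ with hθ
  have hφpow : ∀ k : ℕ, (fun z : ℝ => z ^ ((1 - ε) * k)) =ᶠ[𝓝[>] 0] (fun z => φ z ^ k) := fun k => rpow_pow_eq _ k
  have hθ0 : Tendsto θ (𝓝[>] 0) (𝓝 0) := theta_tendsto μ
  have hφ0 : Tendsto φ (𝓝[>] 0) (𝓝 0) := by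
    have := rpow_isLittleO (show (0:ℝ) < 1 - ε by linarith)
    simp only [Real.rpow_zero] at this
    exact (isLittleO_one_iff ℝ).1 this
  have H : Wt n φ θ := by
    refine ⟨by omega, hφ0, hθ0, ?_, ?_, ?_⟩
    · obtain ⟨s, hs1, hs2⟩ := exists_between (show α < (1 - ε) * n by linarith)
      refine IsLittleO.congr' ?_ (hφpow n) EventuallyEq.rfl
      exact (rpow_isLittleO hs2).trans_isBigO (rpow_isBigO_theta hregμ hs1 (by linarith))
    · have hnN : n - 1 = N := by omega
      rw [hnN]
      rcases Nat.eq_zero_or_pos N with h0 | h0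
      · rw [h0]; simpa only [pow_zero] using (isLittleO_one_iff ℝ).2 hθ0
      · have hNr : (0:ℝ) < N := by exact_mod_cast h0
        have : 0 < ε * N := by positivity
        obtain ⟨s, hs1, hs2⟩ := exists_between (show (1 - ε) * N < α by linarith)
        have hs0 : 0 ≤ s := le_trans (mul_nonneg (by linarith) hNr.le) hs1.le
        refine IsLittleO.congr' ?_ EventuallyEq.rfl (hφpow N)
        exact (theta_isBigO_rpow hregμ hs2 hs0).trans_isLittleO (rpow_isLittleO hs1)
    · have := rpow_isLittleO (show 1 - ε < (1:ℝ) by linarith)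
      simpa only [Real.rpow_one] using this
  have hPV : ∀ k : ℕ, 1 ≤ k → WC n φ θ k (V μ k) := by
    intro k hk
    by_cases h : k < n
    · apply WC.of_o
      rw [w_lt h]
      have hkN : (k:ℝ) ≤ N := by exact_mod_cast (by omega : k ≤ N)
      have hk0 : (0:ℝ) < k := by exact_mod_cast hk
      have : 0 < ε * k := by positivity
      obtain ⟨s, hs1, hs2⟩ := exists_between (show (1 - ε) * k < k by linarith)
      have hs0 : 0 ≤ s := le_trans (mul_nonneg (by linarith) hk0.le) hs1.le
      refine IsLittleO.congr' ?_ EventuallyEq.rfl (hφpow k)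
      exact (V_isBigO_rpow hμ hregμ (by linarith) hs0 hs2).trans_isLittleO (rpow_isLittleO hs1)
    · refine ⟨?_, fun h' => absurd h' h⟩
      rw [w_ge (not_lt.1 h)]
      have : (n:ℝ) ≤ k := by exact_mod_cast (not_lt.1 h)
      exact V_isBigO_theta hμ hregμ (by linarith)
  have hP : ∀ j, WC n φ θ (j+1) (fun z => PowerSeries.coeff j (Pser μ z)) := by
    intro j
    have := (hPV (j+1) (by omega)).mul_bdd (g := fun _ => (-1)^j) (isBigO_const_const _ one_ne_zero _)
    refine this.congr (Eventually.of_forall fun z => ?_)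
    beta_reduce
    rw [coeff_Pser, mul_comm]
  have hpeq : ∀ j, (fun z => (-1)^j * (V ν (j+1) z / z)) =ᶠ[𝓝[>] 0] (fun z => PowerSeries.coeff j (pser ν z)) := by
    intro j
    filter_upwards [self_mem_nhdsWithin] with z hz
    rw [coeff_pser ν hz]
  have hpm : Tendsto (fun z => PowerSeries.coeff 0 (pser ν z)) (𝓝[>] 0) (𝓝 m) := by
    have := V_div_tendsto hν hmean 0
    rw [pow_zero, mul_one] at this
    refine this.congr' ?_
    simpa using hpeq 0
  have hp : MS n φ θ (pser ν) := by
    refine ⟨hpm.isBigO_one ℝ, fun j hj a ha f hf => ?_⟩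
    have hj0 : (0:ℝ) < j := by exact_mod_cast hj
    by_cases h : a < n
    · have hN0 : 1 ≤ N := by omega
      have hN0' : (1:ℝ) ≤ N := by exact_mod_cast hN0
      -- bound of the coefficient
      have hcoef : ∀ s : ℝ, V ν (j+1) =O[𝓝[>] 0] (fun z => z ^ s) →
          (fun z => PowerSeries.coeff j (pser ν z)) =O[𝓝[>] 0] (fun z => z ^ (s - 1)) := by
        intro s hs
        have h1 := (hs.mul (isBigO_refl (fun z : ℝ => z⁻¹) (𝓝[>] 0))).const_mul_left ((-1)^j)
        refine h1.congr' ?_ ?_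
        · refine EventuallyEq.trans (Eventually.of_forall fun z => ?_) (hpeq j)
          simp only [div_eq_mul_inv]
        · filter_upwards [self_mem_nhdsWithin] with z hz
          have hz' : (0:ℝ) < z := hz
          rw [Real.rpow_sub_one hz'.ne', div_eq_mul_inv]
      by_cases h2 : j + 1 < n
      · have hjN : (j:ℝ) + 1 ≤ N := by exact_mod_cast (by omega : j + 1 ≤ N)
        have : 0 < ε * j := by positivity
        obtain ⟨s, hs1, hs2⟩ := exists_between (show (1 - ε) * j + 1 < j + 1 by linarith)
        have hs0 : 0 ≤ (1 - ε) * j := mul_nonneg (by linarith) hj0.le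
        have h3 := hcoef s (V_isBigO_rpow hν hregν (by linarith) (by linarith) (by push_cast; linarith))
        have h4 := (h3.trans (rpow_isLittleO (show (1 - ε) * j < s - 1 by linarith)).isBigO).congr'
          EventuallyEq.rfl (hφpow j)
        have h5 := (hf.2 h).mul_isBigO h4
        rw [w_lt h] at h5
        simp only [← pow_add] at h5
        exact h5.trans_isBigO (phi_pow_w H _)
      · obtain ⟨s, hs1, hs2⟩ := exists_between (show α + ε < min (n:ℝ) β from lt_min (by linarith) (by linarith))
        rw [lt_min_iff] at hs2
        have hjn : (n:ℝ) ≤ (j:ℝ) + 1 := by exact_mod_cast (not_lt.1 h2)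
        have h3 := hcoef s (V_isBigO_rpow hν hregν hs2.2 (by linarith) (by push_cast; linarith))
        have h4 := (hf.2 h)
        rw [w_lt h] at h4
        have h5 := (h4.trans_isBigO (phi_pow_anti H ha)).mul_isBigO h3
        rw [w_ge (by omega)]
        refine h5.trans_isBigO ?_
        refine IsBigO.congr' (rpow_isBigO_theta hregμ (show α < s - ε by linarith) (by linarith)) ?_ EventuallyEq.rfl
        filter_upwards [self_mem_nhdsWithin] with z hz
        have hz' : (0:ℝ) < z := hz
        rw [pow_one, hφ, ← Real.rpow_add hz']
        congr 1; ring
    · have h3 := hf.1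
      rw [w_ge (not_lt.1 h)] at h3
      rw [w_ge (by omega)]
      have h4 : (fun z => PowerSeries.coeff j (pser ν z)) =o[𝓝[>] 0] (fun _ => (1:ℝ)) := by
        rw [isLittleO_one_iff]
        have := (V_div_tendsto hν hmean j).const_mul ((-1)^j)
        rw [zero_pow (by omega), mul_zero, mul_zero] at this
        exact this.congr' (hpeq j)
      simpa using h3.mul_isLittleO h4
  have hK : MS n φ θ (Kser μ ν) := by
    have k1 := MS.ofP H hP
    have k2 := MS.z H
    exact (((k1.add (k2.mul hp)).sub (k1.mul hp)).sub (k2.mul (k1.mul hp)))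
  have hK0 : Tendsto (fun z => PowerSeries.coeff 0 (Kser μ ν z)) (𝓝[>] 0) (𝓝 0) := by
    have hv : Tendsto (fun z => PowerSeries.coeff 0 (Pser μ z)) (𝓝[>] 0) (𝓝 0) := by
      have := V_tendsto_zero hμ (k := 1) le_rfl
      simpa [coeff_Pser] using this
    have hzz : Tendsto (fun z : ℝ => z) (𝓝[>] 0) (𝓝 0) := tendsto_id.mono_left nhdsWithin_le_nhds
    have := ((hv.add (hzz.mul hpm)).sub (hv.mul hpm)).sub (hzz.mul (hv.mul hpm))
    simp only [zero_mul, mul_zero, add_zero, sub_zero] at this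
    refine this.congr fun z => ?_
    simp [Kser]
  refine ⟨n, V_isBigO_theta hμ hregμ hnα, fun k hk => ?_⟩
  obtain ⟨j, rfl⟩ : ∃ j, k = j + 1 := ⟨k - 1, by omega⟩
  have h1 := (main_induction hP hp hpm hK hK0 (series_identity hμ hν hρ hid) j).2
  rw [w_ge hk] at h1
  have h2 := h1.const_mul_left ((-1)^j)
  refine h2.congr' (Eventually.of_forall fun z => ?_) EventuallyEq.rfl
  beta_reduce
  rw [coeff_Pser, coeff_Pser]
  have : ((-1:ℝ)^j) * (-1)^j = 1 := by rw [← mul_pow]; simp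
  linear_combination (V ρ (j+1) z - m * V μ (j+1) z) * this

/-- weighted integral -/
def W (τ : Measure ℝ) (n : ℕ) (f : ℝ → ℝ) (z : ℝ) : ℝ :=
  ∫ t, (z * t / (1 + z * t)) ^ n * f (z * t / (1 + z * t)) ∂τ

lemma W_integrable {τ : Measure ℝ} [IsProbabilityMeasure τ] (h : τ (Set.Iio (0:ℝ)) = 0) (n : ℕ)
    {f : ℝ → ℝ} (hf : Continuous f) {z : ℝ} (hz : 0 < z) :
    Integrable (fun t => (z * t / (1 + z * t)) ^ n * f (z * t / (1 + z * t))) τ := by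
  obtain ⟨C, hC⟩ := (isCompact_Icc (a := (0:ℝ)) (b := 1)).exists_bound_of_continuousOn hf.continuousOn
  have hfm := hf.measurable
  refine (integrable_const C).mono' (Measurable.aestronglyMeasurable (by fun_prop)) ?_
  filter_upwards [ae_nonneg h] with t ht
  obtain ⟨h1, h2⟩ := v_bd hz ht
  rw [norm_mul, Real.norm_of_nonneg (pow_nonneg h1 n)]
  calc _ ≤ 1 * C := mul_le_mul (pow_le_one₀ h1 h2) (hC _ ⟨h1, h2⟩) (norm_nonneg _) zero_le_one
    _ = C := one_mul C

lemma W_poly {τ : Measure ℝ} [IsProbabilityMeasure τ] (h : τ (Set.Iio (0:ℝ)) = 0) (n : ℕ)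
    (p : Polynomial ℝ) {z : ℝ} (hz : 0 < z) :
    W τ n (fun v => p.eval v) z = ∑ i ∈ Finset.range (p.natDegree + 1), p.coeff i * V τ (n + i) z := by
  simp only [W, V, ← integral_const_mul]
  rw [← integral_finset_sum _ (fun i _ => (V_integrable h (n+i) hz).const_mul _)]
  congr 1; funext t
  rw [Polynomial.eval_eq_sum_range, Finset.mul_sum]
  refine Finset.sum_congr rfl fun i _ => ?_
  rw [pow_add]; ring

lemma W_sub_le {τ : Measure ℝ} [IsProbabilityMeasure τ] (h : τ (Set.Iio (0:ℝ)) = 0) (n : ℕ)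
    {f g : ℝ → ℝ} (hf : Continuous f) (hg : Continuous g) {δ : ℝ}
    (hfg : ∀ v ∈ Set.Icc (0:ℝ) 1, |f v - g v| ≤ δ) {z : ℝ} (hz : 0 < z) :
    |W τ n f z - W τ n g z| ≤ δ * V τ n z := by
  rw [W, W, ← integral_sub (W_integrable h n hf hz) (W_integrable h n hg hz), V, ← integral_const_mul,
    ← Real.norm_eq_abs]
  refine norm_integral_le_of_norm_le ((V_integrable h n hz).const_mul _) ?_
  filter_upwards [ae_nonneg h] with t ht
  obtain ⟨h1, h2⟩ := v_bd hz ht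
  rw [← mul_sub, norm_mul, Real.norm_of_nonneg (pow_nonneg h1 n), mul_comm, Real.norm_eq_abs]
  exact mul_le_mul_of_nonneg_right (hfg _ ⟨h1, h2⟩) (pow_nonneg h1 n)

lemma W_asymp {μ ρ : Measure ℝ} [IsProbabilityMeasure μ] [IsProbabilityMeasure ρ]
    (hμ : μ (Set.Iio (0 : ℝ)) = 0) (hρ : ρ (Set.Iio (0 : ℝ)) = 0) {m : ℝ} {θ : ℝ → ℝ} {n : ℕ}
    (hV : V μ n =O[𝓝[>] 0] θ)
    (hk : ∀ k : ℕ, n ≤ k → (fun z => V ρ k z - m * V μ k z) =o[𝓝[>] 0] θ)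
    {f : ℝ → ℝ} (hf : Continuous f) :
    (fun z => W ρ n f z - m * W μ n f z) =o[𝓝[>] 0] θ := by
  have hVρ : V ρ n =O[𝓝[>] 0] θ := by
    have := (hk n le_rfl).isBigO.add (hV.const_mul_left m)
    simpa using this
  obtain ⟨C, hC0, hC⟩ := (hVρ.norm_left.add (hV.norm_left.const_mul_left |m|)).exists_pos
  rw [isLittleO_iff]
  intro c hc
  obtain ⟨p, hp⟩ := exists_polynomial_near_of_continuousOn 0 1 f hf.continuousOn (c / (2 * C)) (by positivity)
  have hpo : (fun z => W ρ n (fun v => p.eval v) z - m * W μ n (fun v => p.eval v) z) =o[𝓝[>] 0] θ := by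
    have : (fun z => ∑ i ∈ Finset.range (p.natDegree + 1), p.coeff i * (V ρ (n + i) z - m * V μ (n+i) z)) =o[𝓝[>] 0] θ :=
      IsLittleO.fun_sum fun i _ => (hk (n+i) (by omega)).const_mul_left _
    refine this.congr' ?_ EventuallyEq.rfl
    filter_upwards [self_mem_nhdsWithin] with z hz
    rw [W_poly hρ n p hz, W_poly hμ n p hz, Finset.mul_sum, ← Finset.sum_sub_distrib]
    refine Finset.sum_congr rfl fun i _ => ?_
    ring
  filter_upwards [self_mem_nhdsWithin, hC.bound, (isLittleO_iff.1 hpo) (half_pos hc)] with z hz h1 h2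
  have hfp : ∀ v ∈ Set.Icc (0:ℝ) 1, |f v - p.eval v| ≤ c / (2 * C) := fun v hv => by
    rw [abs_sub_comm]; exact (hp v hv).le
  have e1 := W_sub_le hρ n hf p.continuous hfp hz
  have e2 := W_sub_le hμ n hf p.continuous hfp hz
  have p1 := V_nonneg hρ n hz
  have p2 := V_nonneg hμ n hz
  simp only [Real.norm_eq_abs] at h1 h2 ⊢
  rw [abs_of_nonneg p1, abs_of_nonneg p2, abs_of_nonneg (by positivity)] at h1
  have e3 : |m| * |W μ n f z - W μ n (fun v => p.eval v) z| ≤ |m| * (c / (2 * C) * V μ n z) :=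
    mul_le_mul_of_nonneg_left e2 (abs_nonneg m)
  rw [← abs_mul] at e3
  have e4 : c / (2 * C) * (V ρ n z + |m| * V μ n z) ≤ c / (2 * C) * (C * |θ z|) :=
    mul_le_mul_of_nonneg_left h1 (by positivity)
  have e5 : c / (2 * C) * (C * |θ z|) = c / 2 * |θ z| := by field_simp
  have e6 : W ρ n f z - m * W μ n f z = (W ρ n (fun v => p.eval v) z - m * W μ n (fun v => p.eval v) z)
    + (W ρ n f z - W ρ n (fun v => p.eval v) z) - m * (W μ n f z - W μ n (fun v => p.eval v) z) := by ring
  rw [e6]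
  refine (abs_sub _ _).trans ?_
  have e7 := abs_add_le (W ρ n (fun v => p.eval v) z - m * W μ n (fun v => p.eval v) z)
    (W ρ n f z - W ρ n (fun v => p.eval v) z)
  linarith

/-- cutoff -/
def chi (a b v : ℝ) : ℝ := max 0 (min 1 ((v - a) / (b - a)))

lemma chi_cont (a b : ℝ) : Continuous (chi a b) := by unfold chi; fun_prop

lemma chi_le {a b v : ℝ} : chi a b v ≤ 1 := max_le zero_le_one (min_le_left _ _)

lemma chi_nonneg {a b v : ℝ} : 0 ≤ chi a b v := le_max_left _ _

lemma chi_zero {a b v : ℝ} (hab : a < b) (hv : v ≤ a) : chi a b v = 0 :=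
  max_eq_left ((min_le_right _ _).trans (div_nonpos_of_nonpos_of_nonneg (by linarith) (by linarith)))

lemma chi_one {a b v : ℝ} (hab : a < b) (hv : b ≤ v) : chi a b v = 1 := by
  have : 1 ≤ (v - a) / (b - a) := by rw [le_div_iff₀ (by linarith)]; linarith
  rw [chi, min_eq_left this, max_eq_right zero_le_one]

/-- smoothed tail -/
def X (τ : Measure ℝ) (a b z : ℝ) : ℝ := ∫ t, chi a b (z * t / (1 + z * t)) ∂τ

lemma X_integrable (τ : Measure ℝ) [IsProbabilityMeasure τ] (a b z : ℝ) :
    Integrable (fun t => chi a b (z * t / (1 + z * t))) τ := by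
  have hm := (chi_cont a b).measurable
  refine (integrable_const (1:ℝ)).mono' (Measurable.aestronglyMeasurable (by fun_prop)) ?_
  refine Eventually.of_forall fun t => ?_
  rw [Real.norm_of_nonneg chi_nonneg]; exact chi_le

lemma X_eq {τ : Measure ℝ} [IsProbabilityMeasure τ] (h : τ (Set.Iio (0:ℝ)) = 0) (n : ℕ) {a b : ℝ}
    (ha : 0 < a) (hab : a < b) {z : ℝ} : X τ a b z = W τ n (fun v => chi a b v / (max v a) ^ n) z := by
  rw [X, W]
  congr 1; funext t
  generalize z * t / (1 + z * t) = v
  rcases le_or_gt v a with hv | hv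
  · simp [chi_zero hab hv]
  · have : 0 < v := ha.trans hv
    rw [max_eq_left hv.le]
    field_simp

lemma X_asymp {μ ρ : Measure ℝ} [IsProbabilityMeasure μ] [IsProbabilityMeasure ρ]
    (hμ : μ (Set.Iio (0 : ℝ)) = 0) (hρ : ρ (Set.Iio (0 : ℝ)) = 0) {m : ℝ} {θ : ℝ → ℝ} {n : ℕ}
    (hV : V μ n =O[𝓝[>] 0] θ)
    (hk : ∀ k : ℕ, n ≤ k → (fun z => V ρ k z - m * V μ k z) =o[𝓝[>] 0] θ)
    {a b : ℝ} (ha : 0 < a) (hab : a < b) :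
    (fun z => X ρ a b z - m * X μ a b z) =o[𝓝[>] 0] θ := by
  have hc : Continuous (fun v => chi a b v / (max v a) ^ n) := by
    refine (chi_cont a b).div (by fun_prop) fun v => ?_
    have : 0 < max v a := lt_max_of_lt_right ha
    positivity
  refine (W_asymp hμ hρ hV hk hc).congr' (Eventually.of_forall fun z => ?_) EventuallyEq.rfl
  beta_reduce
  rw [X_eq hρ n ha hab, X_eq hμ n ha hab]

lemma X_upper {τ : Measure ℝ} [IsProbabilityMeasure τ] (h : τ (Set.Iio (0:ℝ)) = 0) {c d : ℝ}
    (hc : 0 < c) (hcd : c / (1 + c) < d / (1 + d)) {z : ℝ} (hz : 0 < z) :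
    X τ (c / (1 + c)) (d / (1 + d)) z ≤ Tl τ (c * z⁻¹) := by
  have e : Tl τ (c * z⁻¹) = ∫ t, (Set.Ioi (c * z⁻¹)).indicator 1 t ∂τ := by
    rw [integral_indicator_one measurableSet_Ioi]; rfl
  rw [e, X]
  refine integral_mono_ae (X_integrable τ _ _ z)
    ((integrable_const (1:ℝ)).indicator measurableSet_Ioi) ?_
  filter_upwards [ae_nonneg h] with t ht
  by_cases h1 : t ∈ Set.Ioi (c * z⁻¹)
  · rw [Set.indicator_of_mem h1]; exact chi_le
  · rw [Set.indicator_of_notMem h1, chi_zero hcd]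
    have h2 : t ≤ c * z⁻¹ := not_lt.1 h1
    rw [← div_eq_mul_inv, le_div_iff₀ hz] at h2
    have : 0 ≤ z * t := by positivity
    rw [div_le_div_iff₀ (by linarith) (by linarith)]
    nlinarith

lemma X_lower {τ : Measure ℝ} [IsProbabilityMeasure τ] (h : τ (Set.Iio (0:ℝ)) = 0) {c d : ℝ}
    (hd : 0 < d) (hcd : c / (1 + c) < d / (1 + d)) {z : ℝ} (hz : 0 < z) :
    Tl τ (d * z⁻¹) ≤ X τ (c / (1 + c)) (d / (1 + d)) z := by
  have e : Tl τ (d * z⁻¹) = ∫ t, (Set.Ioi (d * z⁻¹)).indicator 1 t ∂τ := by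
    rw [integral_indicator_one measurableSet_Ioi]; rfl
  rw [e, X]
  refine integral_mono_ae ((integrable_const (1:ℝ)).indicator measurableSet_Ioi)
    (X_integrable τ _ _ z) ?_
  filter_upwards [ae_nonneg h] with t ht
  by_cases h1 : t ∈ Set.Ioi (d * z⁻¹)
  · rw [Set.indicator_of_mem h1, chi_one hcd]
    · exact le_rfl
    have h2 : d * z⁻¹ < t := h1
    rw [← div_eq_mul_inv, div_lt_iff₀ hz] at h2
    have : 0 ≤ z * t := by positivity
    rw [div_le_div_iff₀ (by linarith) (by linarith)]
    nlinarith
  · rw [Set.indicator_of_notMem h1]; exact chi_nonneg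

lemma tauber {μ ρ : Measure ℝ} [IsProbabilityMeasure μ] [IsProbabilityMeasure ρ]
    (hμ : μ (Set.Iio (0 : ℝ)) = 0) (hρ : ρ (Set.Iio (0 : ℝ)) = 0) {m α : ℝ} {n : ℕ} (hm : 0 < m)
    (hreg : RegVarTail μ α)
    (hV : V μ n =O[𝓝[>] 0] (fun z => Tl μ z⁻¹))
    (hk : ∀ k : ℕ, n ≤ k → (fun z => V ρ k z - m * V μ k z) =o[𝓝[>] 0] (fun z => Tl μ z⁻¹)) :
    Tendsto (fun x => Tl ρ x / Tl μ x) atTop (𝓝 m) := by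
  -- sandwich
  have key : ∀ c d : ℝ, 0 < c → c < d → ∃ r : ℝ → ℝ, Tendsto r atTop (𝓝 0) ∧
      ∀ᶠ x in atTop, Tl ρ (d * x) / Tl μ x ≤ m * (Tl μ (c * x) / Tl μ x) + r x ∧
        m * (Tl μ (d * x) / Tl μ x) + r x ≤ Tl ρ (c * x) / Tl μ x := by
    intro c d hc hcd
    have hd := hc.trans hcd
    have hcd' : c / (1 + c) < d / (1 + d) := by
      rw [div_lt_div_iff₀ (by linarith) (by linarith)]; nlinarith
    have h1 := (X_asymp hμ hρ hV hk (show 0 < c / (1 + c) by positivity) hcd').tendsto_div_nhds_zero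
    refine ⟨_, h1.comp tendsto_inv_atTop_nhdsGT_zero, ?_⟩
    filter_upwards [eventually_gt_atTop 0] with x hx
    have hp : 0 < Tl μ x := Tl_pos hreg hx.le
    have hz : 0 < x⁻¹ := inv_pos.2 hx
    have a1 := X_upper hμ hc hcd' hz
    have a2 := X_upper hρ hc hcd' hz
    have a3 := X_lower hμ hd hcd' hz
    have a4 := X_lower hρ hd hcd' hz
    simp only [inv_inv, Function.comp] at *
    have b1 := mul_le_mul_of_nonneg_left a1 hm.le
    have b3 := mul_le_mul_of_nonneg_left a3 hm.le
    rw [← mul_div_assoc, ← mul_div_assoc, ← add_div, ← add_div]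
    constructor
    · exact div_le_div_of_nonneg_right (by linarith) hp.le
    · exact div_le_div_of_nonneg_right (by linarith) hp.le
  have hcont : ContinuousAt (fun c : ℝ => m * c ^ (-α)) 1 :=
    continuousAt_const.mul (Real.continuousAt_rpow_const _ _ (Or.inl one_ne_zero))
  have hc1 := hcont.tendsto
  simp only [Real.one_rpow, mul_one] at hc1
  rw [tendsto_order]
  constructor
  · intro a ha
    have e1 : ∀ᶠ c in 𝓝[>] (1:ℝ), a < m * c ^ (-α) := nhdsWithin_le_nhds (hc1.eventually (lt_mem_nhds ha))
    obtain ⟨d, hd1, hd2⟩ := (e1.and self_mem_nhdsWithin).exists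
    have hd3 : (1:ℝ) < d := hd2
    obtain ⟨r, hr, hx⟩ := key 1 d one_pos hd3
    have h2 := ((hreg.2 d (by linarith)).const_mul m).add hr
    rw [add_zero] at h2
    filter_upwards [hx, h2.eventually (lt_mem_nhds hd1)] with x h3 h4
    have := h3.2
    rw [one_mul] at this
    exact lt_of_lt_of_le h4 this
  · intro a ha
    have e1 : ∀ᶠ c in 𝓝[<] (1:ℝ), m * c ^ (-α) < a ∧ 0 < c := nhdsWithin_le_nhds
      ((hc1.eventually (gt_mem_nhds ha)).and (lt_mem_nhds one_pos))
    obtain ⟨c, ⟨hd1, hc0⟩, hd2⟩ := (e1.and self_mem_nhdsWithin).exists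
    have hd3 : c < 1 := hd2
    obtain ⟨r, hr, hx⟩ := key c 1 hc0 hd3
    have h2 := ((hreg.2 c hc0).const_mul m).add hr
    rw [add_zero] at h2
    filter_upwards [hx, h2.eventually (gt_mem_nhds hd1)] with x h3 h4
    have := h3.1
    rw [one_mul] at this
    exact lt_of_le_of_lt this h4

lemma Psi_eq {τ : Measure ℝ} [IsProbabilityMeasure τ] (s : ℝ) :
    PsiTrans τ (-(s:ℂ)) = ((-(s * A τ 1 s) : ℝ) : ℂ) := by
  rw [PsiTrans, A, ← integral_const_mul, ← integral_neg, ← integral_complex_ofReal]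
  congr 1; funext t
  push_cast
  rw [pow_one, mul_div_assoc', ← neg_div]
  congr 1 <;> ring

lemma B_eq {τ : Measure ℝ} [IsProbabilityMeasure τ] {s : ℝ} (hs : 0 < s) :
    Btrans τ (-(s:ℂ)) = (((1 - s * A τ 1 s) / A τ 1 s : ℝ) : ℂ) := by
  have hs' : (s:ℂ) ≠ 0 := by exact_mod_cast hs.ne'
  rw [Btrans, etaTrans, Psi_eq]
  push_cast
  rw [div_div_eq_mul_div]
  by_cases h : (A τ 1 s : ℂ) = 0
  · simp [h]
  · field_simp
    ring

lemma A_pos {τ : Measure ℝ} [IsProbabilityMeasure τ] (h : τ (Set.Iio (0:ℝ)) = 0)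
    (h0 : 0 < τ (Set.Ioi (0:ℝ))) {s : ℝ} (hs : 0 < s) : 0 < A τ 1 s := by
  rw [A, integral_pos_iff_support_of_nonneg_ae _ (A_integrable h 1 hs)]
  · refine h0.trans_le (measure_mono fun t ht => ?_)
    have ht' : (0:ℝ) < t := ht
    have : 0 < (t / (1 + s * t)) ^ 1 := by positivity
    exact this.ne'
  · filter_upwards [ae_nonneg h] with t ht
    have : 0 ≤ s * t := by positivity
    change (0:ℝ) ≤ (t / (1 + s * t)) ^ 1
    positivity

lemma one_sub_pos {τ : Measure ℝ} [IsProbabilityMeasure τ] (h : τ (Set.Iio (0:ℝ)) = 0)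
    {s : ℝ} (hs : 0 < s) : 0 < 1 - s * A τ 1 s := by
  have e : 1 - s * A τ 1 s = ∫ t, (1 - s * (t / (1 + s * t)) ^ 1) ∂τ := by
    rw [integral_sub (integrable_const _) ((A_integrable h 1 hs).const_mul s), integral_const_mul]
    simp [A]
  have hp : ∀ t : ℝ, 0 ≤ t → 0 < 1 - s * (t / (1 + s * t)) ^ 1 := by
    intro t ht
    have h1 : 0 ≤ s * t := by positivity
    have : 1 - s * (t / (1 + s * t)) ^ 1 = 1 / (1 + s * t) := by field_simp; ring
    rw [this]; positivity
  rw [e, integral_pos_iff_support_of_nonneg_ae]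
  · have : 0 < τ (Set.Ici (0:ℝ)) := by
      have h1 : τ (Set.Iio (0:ℝ))ᶜ = 1 := (prob_compl_eq_one_iff measurableSet_Iio).2 h
      rw [Set.compl_Iio] at h1
      rw [h1]; exact one_pos
    exact this.trans_le (measure_mono fun t ht => (hp t ht).ne')
  · filter_upwards [ae_nonneg h] with t ht using (hp t ht).le
  · exact (integrable_const _).sub ((A_integrable h 1 hs).const_mul s)

lemma mean_pos {τ : Measure ℝ} [IsProbabilityMeasure τ] (h : τ (Set.Iio (0:ℝ)) = 0)
    (h0 : 0 < τ (Set.Ioi (0:ℝ))) (hm : Integrable (fun x : ℝ => x) τ) : 0 < ∫ x, x ∂τ := by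
  rw [integral_pos_iff_support_of_nonneg_ae _ hm]
  · exact h0.trans_le (measure_mono fun t ht => (show (0:ℝ) < t from ht).ne')
  · filter_upwards [ae_nonneg h] with t ht using ht

lemma conclude {μ ρ : Measure ℝ} [IsProbabilityMeasure μ] [IsProbabilityMeasure ρ] {m α : ℝ} (hm : 0 < m)
    (hreg : RegVarTail μ α) (h : Tendsto (fun x => Tl ρ x / Tl μ x) atTop (𝓝 m)) :
    RegVarTail ρ α ∧ Tendsto (fun y => Tl ρ y / (m * Tl μ y)) atTop (𝓝 1) := by
  have hev : ∀ᶠ x in atTop, 0 < Tl ρ x := by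
    filter_upwards [h.eventually (lt_mem_nhds hm)] with x hx
    by_contra h0
    have : Tl ρ x = 0 := le_antisymm (not_lt.1 h0) (Tl_nonneg _ _)
    rw [this, zero_div] at hx
    exact lt_irrefl _ hx
  refine ⟨⟨fun x _ => ?_, fun t ht => ?_⟩, ?_⟩
  · obtain ⟨y, hy, hxy⟩ := (hev.and (eventually_ge_atTop x)).exists
    exact (ENNReal.toReal_pos_iff.1 (hy.trans_le (Tl_anti ρ hxy))).1
  · have h1 : Tendsto (fun x => Tl ρ (t * x) / Tl μ (t * x)) atTop (𝓝 m) :=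
      h.comp (tendsto_id.const_mul_atTop ht)
    have h2 := (h1.mul (hreg.2 t ht)).div h hm.ne'
    rw [mul_div_cancel_left₀ _ hm.ne'] at h2
    refine h2.congr' ?_
    filter_upwards [eventually_gt_atTop 0, hev] with x hx hρ
    have p1 : 0 < Tl μ x := Tl_pos hreg hx.le
    have p2 : 0 < Tl μ (t * x) := Tl_pos hreg (by positivity)
    change Tl ρ (t * x) / Tl μ (t * x) * (Tl μ (t * x) / Tl μ x) / (Tl ρ x / Tl μ x) = Tl ρ (t*x) / Tl ρ x
    field_simp
  · have h2 := h.div_const m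
    rw [div_self hm.ne'] at h2
    refine h2.congr fun x => ?_
    rw [div_div, mul_comm]

end BB

/-- Boolean Breiman theorem, dominated case. -/
theorem boolean_breiman_dominated
    (α β : ℝ) (hα : 0 ≤ α) (hαβ : α < β)
    (μ ν ρ : Measure ℝ)
    [IsProbabilityMeasure μ] [IsProbabilityMeasure ν] [IsProbabilityMeasure ρ]
    (hsuppμ : μ (Set.Iio (0 : ℝ)) = 0) (hsuppν : ν (Set.Iio (0 : ℝ)) = 0)
    (hsuppρ : ρ (Set.Iio (0 : ℝ)) = 0)
    (hregμ : RegVarTail μ α) (hregν : RegVarTail ν β)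
    (hmean : Integrable (fun x : ℝ => x) ν)
    (hB : ∀ z : ℂ, offHalfLine z → Btrans ρ z = Btrans μ z * Btrans ν z) :
    RegVarTail ρ α ∧
    Filter.Tendsto
      (fun y : ℝ => (ρ (Set.Ioi y)).toReal / ((∫ x, x ∂ν) * (μ (Set.Ioi y)).toReal))
      Filter.atTop (nhds 1) := by
  have hm := BB.mean_pos hsuppν (hregν.1 0 le_rfl) hmean
  have hid : ∀ z : ℝ, 0 < z → (1 - z * BB.A ρ 1 z) * (BB.A μ 1 z * BB.A ν 1 z) =
      BB.A ρ 1 z * ((1 - z * BB.A μ 1 z) * (1 - z * BB.A ν 1 z)) := by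
    intro z hz
    have h1 := hB (-(z:ℂ)) (Or.inr (by simpa using hz))
    rw [BB.B_eq hz, BB.B_eq hz, BB.B_eq hz] at h1
    have h2 : (1 - z * BB.A ρ 1 z) / BB.A ρ 1 z =
      (1 - z * BB.A μ 1 z) / BB.A μ 1 z * ((1 - z * BB.A ν 1 z) / BB.A ν 1 z) := by exact_mod_cast h1
    have a1 := BB.A_pos hsuppμ (hregμ.1 0 le_rfl) hz
    have a2 := BB.A_pos hsuppν (hregν.1 0 le_rfl) hz
    have b1 := BB.one_sub_pos hsuppμ hz
    have b2 := BB.one_sub_pos hsuppν hz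
    have hne : BB.A ρ 1 z ≠ 0 := by
      intro h0
      rw [h0, div_zero] at h2
      have : 0 < (1 - z * BB.A μ 1 z) / BB.A μ 1 z * ((1 - z * BB.A ν 1 z) / BB.A ν 1 z) := by
        exact mul_pos (div_pos b1 a1) (div_pos b2 a2)
      exact this.ne h2
    rw [div_mul_div_comm, div_eq_div_iff hne (mul_pos a1 a2).ne'] at h2
    rw [h2, mul_comm]
  obtain ⟨n, hV, hk⟩ := BB.key_asymp α β hα hαβ μ ν ρ hsuppμ hsuppν hsuppρ hregμ hregν hmean hid
  exact BB.conclude hm hregμ (BB.tauber hsuppμ hsuppρ hm hregμ hV hk)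
end
end

section
/- Moments of the multiplicative Boolean convolution: let p, q be integers with 0 ≤ p ≤ q and q ≥ 1, let μ ∈ M_p and ν ∈ M_q. If ρ is a probability measure on [0,∞) with B_ρ(z) = B_μ(z)·B_ν(z) for all z ∈ ℂ∖[0,∞) (so ρ = μ ⨯∪ ν, the multiplicative Boolean convolution), then ρ ∈ M_p, i.e. ∫ x^p dρ(x) < ∞ and ∫ x^{p+1} dρ(x) = ∞. -/
open MeasureTheory Filter Set Complex

noncomputable section
set_option linter.unusedSectionVars false
set_option linter.unusedVariables false

/-- `μ ∈ M_p`: the `p`-th moment is finite but the `(p+1)`-th moment is infinite. -/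
def MemMp (μ : Measure ℝ) (p : ℕ) : Prop :=
  (∫⁻ x, ENNReal.ofReal (x ^ p) ∂μ) ≠ ⊤ ∧ (∫⁻ x, ENNReal.ofReal (x ^ (p + 1)) ∂μ) = ⊤


/-- Asymptotic expansion predicate. -/
def ExpBM (p : ℕ) (f : ℝ → ℝ) (P : Polynomial ℝ) (r : ℝ → ℝ) : Prop :=
  0 < P.eval 0 ∧ (∀ᶠ s in nhdsWithin (0:ℝ) (Ioi 0), f s = P.eval s + (-1)^p * s^p * r s) ∧
  Tendsto (fun s => s * r s) (nhdsWithin (0:ℝ) (Ioi 0)) (nhds 0) ∧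
  ∃ C, ∀ᶠ s in nhdsWithin (0:ℝ) (Ioi 0), C ≤ r s

lemma bm_tid : Tendsto (fun s : ℝ => s) (nhdsWithin (0:ℝ) (Ioi 0)) (nhds 0) :=
  tendsto_nhdsWithin_of_tendsto_nhds tendsto_id

lemma bm_poly (P : Polynomial ℝ) :
    Tendsto (fun s : ℝ => P.eval s) (nhdsWithin (0:ℝ) (Ioi 0)) (nhds (P.eval 0)) :=
  tendsto_nhdsWithin_of_tendsto_nhds (P.continuous.tendsto 0)

lemma bm_pow_r {r : ℝ → ℝ} (h : Tendsto (fun s => s * r s) (nhdsWithin (0:ℝ) (Ioi 0)) (nhds 0))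
    (k : ℕ) (hk : 1 ≤ k) :
    Tendsto (fun s => s^k * r s) (nhdsWithin (0:ℝ) (Ioi 0)) (nhds 0) := by
  obtain ⟨j, rfl⟩ : ∃ j, k = j + 1 := ⟨k-1, by omega⟩
  have := (bm_tid.pow j).mul h
  rw [mul_zero] at this
  refine this.congr fun s => ?_
  ring

lemma bm_lim {p : ℕ} (hp : 1 ≤ p) {f P r} (h : ExpBM p f P r) :
    Tendsto f (nhdsWithin (0:ℝ) (Ioi 0)) (nhds (P.eval 0)) := by
  obtain ⟨h0, h1, h2, h3⟩ := h
  have := (bm_poly P).add ((bm_pow_r h2 p hp).const_mul ((-1)^p))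
  rw [mul_zero, add_zero] at this
  refine this.congr' ?_
  filter_upwards [h1] with s hs
  rw [hs]; ring

lemma bm_mul {p : ℕ} (hp : 1 ≤ p) {f P r g Q t} (h : ExpBM p f P r) (h' : ExpBM p g Q t)
    (ht : Tendsto t (nhdsWithin (0:ℝ) (Ioi 0)) atTop) :
    ∃ r', ExpBM p (fun s => f s * g s) (P * Q) r' ∧
      Tendsto r' (nhdsWithin (0:ℝ) (Ioi 0)) atTop := by
  have hf := bm_lim hp h
  obtain ⟨h0, h1, h2, C, h3⟩ := h
  obtain ⟨k0, k1, k2, -⟩ := h'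
  have hlim : Tendsto (fun s => r s * Q.eval s + t s * f s) (nhdsWithin (0:ℝ) (Ioi 0)) atTop := by
    have hA := ht.atTop_mul_pos h0 hf
    refine tendsto_atTop_add_left_of_le' _ (-(|C| * (2 * Q.eval 0))) ?_ hA
    have e1 := (bm_poly Q).eventually (Ioo_mem_nhds (show (0:ℝ) < Q.eval 0 from k0)
      (show Q.eval 0 < 2 * Q.eval 0 by linarith))
    filter_upwards [h3, e1] with s hs hs'
    have : -|C| ≤ r s := le_trans (neg_abs_le C) hs
    have := abs_nonneg C
    nlinarith [hs'.1, hs'.2]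
  refine ⟨fun s => r s * Q.eval s + t s * f s, ⟨?_, ?_, ?_, ?_⟩, hlim⟩
  · simp only [Polynomial.eval_mul]; positivity
  · filter_upwards [h1, k1] with s hs hs'
    rw [Polynomial.eval_mul, hs', hs]; ring
  · have := (h2.mul (bm_poly Q)).add (k2.mul hf)
    simp only [zero_mul, add_zero] at this
    refine this.congr fun s => ?_
    ring
  · exact ⟨0, hlim.eventually_ge_atTop 0⟩

lemma bm_moeb {p : ℕ} (hp : 1 ≤ p) (ε : ℝ) {f P r} (h : ExpBM p f P r) :
    ∃ P' r', ExpBM p (fun s => f s / (1 + ε * s * f s)) P' r' ∧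
      (Tendsto r (nhdsWithin (0:ℝ) (Ioi 0)) atTop →
        Tendsto r' (nhdsWithin (0:ℝ) (Ioi 0)) atTop) := by
  have hf := bm_lim hp h
  obtain ⟨h0, h1, h2, C, h3⟩ := h
  have d1 : Tendsto (fun s => 1 + ε * s * f s) (nhdsWithin (0:ℝ) (Ioi 0)) (nhds 1) := by
    have := ((bm_tid.const_mul ε).mul hf).const_add 1
    simpa using this
  have d2 : Tendsto (fun s => 1 + ε * s * P.eval s) (nhdsWithin (0:ℝ) (Ioi 0)) (nhds 1) := by
    have := ((bm_tid.const_mul ε).mul (bm_poly P)).const_add 1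
    simpa using this
  have d3 : Tendsto (fun s => ((1 + ε * s * f s) * (1 + ε * s * P.eval s))⁻¹)
      (nhdsWithin (0:ℝ) (Ioi 0)) (nhds 1) := by
    have := (d1.mul d2).inv₀ (by norm_num)
    simpa using this
  have d4 : Tendsto (fun s => P.eval s * (ε * P.eval s)^p * (1 + ε * s * P.eval s)⁻¹)
      (nhdsWithin (0:ℝ) (Ioi 0)) (nhds (P.eval 0 * (ε * P.eval 0)^p)) := by
    have := ((bm_poly P).mul (((bm_poly P).const_mul ε).pow p)).mul (d2.inv₀ one_ne_zero)
    simpa using this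
  set L := P.eval 0 * (ε * P.eval 0)^p with hL
  refine ⟨P * ∑ j ∈ Finset.range p, (-(Polynomial.C ε * Polynomial.X * P))^j,
    fun s => r s * ((1 + ε * s * f s) * (1 + ε * s * P.eval s))⁻¹ +
      P.eval s * (ε * P.eval s)^p * (1 + ε * s * P.eval s)⁻¹, ⟨?_, ?_, ?_, ?_⟩, ?_⟩
  · obtain ⟨j, rfl⟩ : ∃ j, p = j + 1 := ⟨p-1, by omega⟩
    simp [Polynomial.eval_finsetSum, Finset.sum_range_succ', h0]
  · filter_upwards [h1, d1.eventually_ne one_ne_zero, d2.eventually_ne one_ne_zero] with s hs hs1 hs2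
    have hg := mul_neg_geom_sum (-(ε * s * P.eval s)) p
    simp only [Polynomial.eval_mul, Polynomial.eval_finsetSum, Polynomial.eval_pow,
      Polynomial.eval_neg, Polynomial.eval_C, Polynomial.eval_X]
    have hg2 : ∑ i ∈ Finset.range p, (-(ε * s * P.eval s))^i =
        (1 - (-1)^p * s^p * (ε * P.eval s)^p) / (1 + ε * s * P.eval s) := by
      rw [eq_div_iff hs2, mul_comm, ← sub_neg_eq_add, hg, ← mul_pow, ← mul_pow]
      ring
    rw [hg2]
    have hr : (-1)^p * s^p * r s = f s - P.eval s := by rw [hs]; ring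
    generalize P.eval s = a at *
    generalize f s = b at *
    have e1 : b / (1 + ε * s * b) = a / (1 + ε * s * a) +
        (b - a) * ((1 + ε * s * b) * (1 + ε * s * a))⁻¹ := by
      rw [← div_eq_mul_inv, div_add_div _ _ hs2 (mul_ne_zero hs1 hs2),
        div_eq_div_iff hs1 (mul_ne_zero hs2 (mul_ne_zero hs1 hs2))]
      ring
    rw [e1, ← hr]
    ring
  · have := (h2.mul d3).add (bm_tid.mul d4)
    simp only [zero_mul, add_zero] at this
    refine this.congr fun s => ?_
    ring
  · refine ⟨-(|C| * 2) + (L - 1), ?_⟩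
    filter_upwards [h3, d3.eventually (Ioo_mem_nhds (show (0:ℝ) < 1 by norm_num)
      (show (1:ℝ) < 2 by norm_num)), d4.eventually (lt_mem_nhds (show L - 1 < L by linarith))]
      with s hs hs1 hs2
    have : -|C| ≤ r s := le_trans (neg_abs_le C) hs
    have := abs_nonneg C
    refine add_le_add ?_ hs2.le
    nlinarith [hs1.1, hs1.2]
  · intro hr
    exact (hr.atTop_mul_pos one_pos d3).atTop_add d4

lemma bm_polydiv (n : ℕ) : ∀ (D : Polynomial ℝ) (u : ℝ → ℝ),
    (∀ᶠ s in nhdsWithin (0:ℝ) (Ioi 0), D.eval s = s^n * u s) →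
    Tendsto (fun s => s * u s) (nhdsWithin (0:ℝ) (Ioi 0)) (nhds 0) →
    ∃ E : Polynomial ℝ, D = Polynomial.X^n * E := by
  induction n with
  | zero => intro D u _ _; exact ⟨D, by simp⟩
  | succ n ih =>
    intro D u h1 h2
    have h3 : Tendsto (fun s => s * (s * u s)) (nhdsWithin (0:ℝ) (Ioi 0)) (nhds 0) := by
      simpa using bm_tid.mul h2
    obtain ⟨E, hE⟩ := ih D (fun s => s * u s) (by
      filter_upwards [h1] with s hs
      rw [hs]; ring) h3
    have h4 : ∀ᶠ s in nhdsWithin (0:ℝ) (Ioi 0), s * u s = E.eval s := by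
      filter_upwards [h1, self_mem_nhdsWithin] with s hs hs0
      have : (0:ℝ) < s := hs0
      have : s^n ≠ 0 := by positivity
      rw [hE] at hs
      simp only [Polynomial.eval_mul, Polynomial.eval_pow, Polynomial.eval_X] at hs
      apply mul_left_cancel₀ this
      rw [hs]; ring
    have h5 := tendsto_nhds_unique ((h2.congr' h4)) (bm_poly E)
    obtain ⟨F, hF⟩ := (Polynomial.X_dvd_iff (f := E)).2 (by rw [Polynomial.coeff_zero_eq_eval_zero, ← h5])
    exact ⟨F, by rw [hE, hF]; ring⟩

lemma bm_polylim (n : ℕ) (D : Polynomial ℝ) (u : ℝ → ℝ)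
    (h1 : ∀ᶠ s in nhdsWithin (0:ℝ) (Ioi 0), D.eval s = s^n * u s)
    (h2 : Tendsto (fun s => s * u s) (nhdsWithin (0:ℝ) (Ioi 0)) (nhds 0)) :
    ∃ c, Tendsto u (nhdsWithin (0:ℝ) (Ioi 0)) (nhds c) := by
  obtain ⟨E, hE⟩ := bm_polydiv n D u h1 h2
  refine ⟨E.eval 0, (bm_poly E).congr' ?_⟩
  filter_upwards [h1, self_mem_nhdsWithin] with s hs hs0
  have : (0:ℝ) < s := hs0
  have : s^n ≠ 0 := by positivity
  apply mul_left_cancel₀ this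
  rw [← hs, hE]; simp

/-- remainder -/
def bmR (τ : Measure ℝ) (n : ℕ) (s : ℝ) : ℝ := ∫ t, t^(n+1) / (1 + s * t) ∂τ

section
variable {τ : Measure ℝ} [IsProbabilityMeasure τ] (h0 : ∀ᵐ t ∂τ, 0 ≤ t)
include h0

lemma bmR_int {n : ℕ} (hn : Integrable (fun t => t^n) τ) {s : ℝ} (hs : 0 < s) :
    Integrable (fun t => t^(n+1) / (1 + s * t)) τ := by
  refine (hn.const_mul s⁻¹).mono' (Measurable.aestronglyMeasurable (by fun_prop)) ?_
  filter_upwards [h0] with t ht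
  rw [Real.norm_of_nonneg (by positivity), div_le_iff₀ (by positivity)]
  have : s⁻¹ * t^n * (1 + s * t) = s⁻¹ * t^n + t^(n+1) := by field_simp; ring
  rw [this]
  have : 0 ≤ s⁻¹ * t^n := by positivity
  linarith

lemma bmR_nonneg (n : ℕ) {s : ℝ} (hs : 0 < s) : 0 ≤ bmR τ n s := by
  apply integral_nonneg_of_ae
  filter_upwards [h0] with t ht
  simp only [Pi.zero_apply]; positivity

lemma bmR_le {n : ℕ} (hn : Integrable (fun t => t^(n+1)) τ) {s : ℝ} (hs : 0 < s) :
    bmR τ n s ≤ ∫ t, t^(n+1) ∂τ := by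
  apply integral_mono_of_nonneg _ hn
  · filter_upwards [h0] with t ht
    apply div_le_self (by positivity)
    nlinarith [mul_nonneg hs.le ht]
  · filter_upwards [h0] with t ht
    simp only [Pi.zero_apply]; positivity

lemma bmR_anti {n : ℕ} (hn : Integrable (fun t => t^n) τ) {s s' : ℝ} (hs : 0 < s) (hss : s ≤ s') :
    bmR τ n s' ≤ bmR τ n s := by
  apply integral_mono_ae (bmR_int h0 hn (hs.trans_le hss)) (bmR_int h0 hn hs)
  filter_upwards [h0] with t ht
  gcongr

lemma bmR_lim {n : ℕ} (hn : Integrable (fun t => t^n) τ) :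
    Tendsto (fun s => s * bmR τ n s) (nhdsWithin (0:ℝ) (Ioi 0)) (nhds 0) := by
  have : Tendsto (fun s => ∫ t, s * (t^(n+1) / (1 + s * t)) ∂τ) (nhdsWithin (0:ℝ) (Ioi 0))
      (nhds (∫ t, (0:ℝ) ∂τ)) := by
    apply tendsto_integral_filter_of_dominated_convergence (fun t => t^n)
    · exact Eventually.of_forall fun s => Measurable.aestronglyMeasurable (by fun_prop)
    · filter_upwards [self_mem_nhdsWithin] with s hs
      have hs : 0 < s := hs
      filter_upwards [h0] with t ht
      rw [Real.norm_of_nonneg (by positivity), ← mul_div_assoc, div_le_iff₀ (by positivity)]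
      have : 0 ≤ t^n := by positivity
      rw [pow_succ]; nlinarith
    · exact hn
    · refine Eventually.of_forall fun t => ?_
      have : ContinuousAt (fun s : ℝ => s * (t^(n+1) / (1 + s * t))) 0 := by
        refine continuousAt_id.mul (continuousAt_const.div (by fun_prop) (by simp))
      have := this.tendsto
      simp only [zero_mul] at this
      exact tendsto_nhdsWithin_of_tendsto_nhds this
  simpa [bmR, integral_const_mul] using this

lemma bmR_rec {n : ℕ} (hn : Integrable (fun t => t^n) τ) (hn1 : Integrable (fun t => t^(n+1)) τ)
    {s : ℝ} (hs : 0 < s) :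
    bmR τ n s = ∫ t, t^(n+1) ∂τ - s * bmR τ (n+1) s := by
  unfold bmR
  rw [← integral_const_mul, ← integral_sub hn1 ((bmR_int h0 hn1 hs).const_mul s)]
  apply integral_congr_ae
  filter_upwards [h0] with t ht
  have : 1 + s * t ≠ 0 := by positivity
  field_simp
  ring

lemma bm_expand (p : ℕ) (hp : ∀ k ≤ p, Integrable (fun t => t^k) τ) :
    ∃ Q : Polynomial ℝ, (1 ≤ p → Q.eval 0 = ∫ t, t ∂τ) ∧
      ∀ s, 0 < s → bmR τ 0 s = Q.eval s + (-1)^p * s^p * bmR τ p s := by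
  induction p with
  | zero => exact ⟨0, by simp, by simp⟩
  | succ p ih =>
    obtain ⟨Q, hQ, hQ'⟩ := ih fun k hk => hp k (by omega)
    refine ⟨Q + Polynomial.C ((-1)^p * ∫ t, t^(p+1) ∂τ) * Polynomial.X^p, ?_, ?_⟩
    · intro _
      rcases Nat.eq_zero_or_pos p with rfl | hp0
      · have : Q = 0 := by
          apply Polynomial.eq_zero_of_infinite_isRoot
          apply (Set.Ioi_infinite (0:ℝ)).mono
          intro s hs
          have := hQ' s hs
          simp at this
          exact this
        simp [this]
      · simp [hQ hp0, hp0.ne']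
    · intro s hs
      rw [hQ' s hs, bmR_rec h0 (hp p (by omega)) (hp (p+1) le_rfl) hs]
      simp; ring

lemma bmR_bdd {n : ℕ} (hn : Integrable (fun t => t^n) τ) {C : ℝ}
    (hC : ∀ s, 0 < s → bmR τ n s ≤ C) : Integrable (fun t => t^(n+1)) τ := by
  refine ⟨by fun_prop, ?_⟩
  rw [hasFiniteIntegral_iff_ofReal (by filter_upwards [h0] with t ht; positivity)]
  set a : ℕ → ℝ := fun k => 1 / ((k:ℝ) + 1)
  have ha : ∀ k, 0 < a k := fun k => by positivity
  have hlim : Tendsto a atTop (nhds 0) := tendsto_one_div_add_atTop_nhds_zero_nat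
  have key : ∫⁻ t, ENNReal.ofReal (t^(n+1)) ∂τ ≤ ENNReal.ofReal C := by
    calc ∫⁻ t, ENNReal.ofReal (t^(n+1)) ∂τ
        = ∫⁻ t, liminf (fun k => ENNReal.ofReal (t^(n+1) / (1 + a k * t))) atTop ∂τ := by
          apply lintegral_congr
          intro t
          refine (Tendsto.liminf_eq ?_).symm
          apply ENNReal.tendsto_ofReal
          have : Tendsto (fun k => t^(n+1) / (1 + a k * t)) atTop (nhds (t^(n+1) / (1 + 0 * t))) :=
            tendsto_const_nhds.div ((hlim.mul_const t).const_add 1) (by simp)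
          simpa using this
      _ ≤ liminf (fun k => ∫⁻ t, ENNReal.ofReal (t^(n+1) / (1 + a k * t)) ∂τ) atTop :=
          lintegral_liminf_le fun k => by fun_prop
      _ ≤ liminf (fun k : ℕ => ENNReal.ofReal C) atTop := by
          refine liminf_le_liminf (Eventually.of_forall fun k => ?_)
          rw [← ofReal_integral_eq_lintegral_ofReal (bmR_int h0 hn (ha k))]
          · exact ENNReal.ofReal_le_ofReal (hC _ (ha k))
          · filter_upwards [h0] with t ht
            have := ha k
            simp only [Pi.zero_apply]; positivity
      _ = ENNReal.ofReal C := by simp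
  exact key.trans_lt ENNReal.ofReal_lt_top

lemma bmR_top {n : ℕ} (hn : Integrable (fun t => t^n) τ) (hn1 : ¬ Integrable (fun t => t^(n+1)) τ) :
    Tendsto (bmR τ n) (nhdsWithin (0:ℝ) (Ioi 0)) atTop := by
  rw [tendsto_atTop]
  intro C
  have : ∃ s, 0 < s ∧ C < bmR τ n s := by
    by_contra! h
    exact hn1 (bmR_bdd h0 hn h)
  obtain ⟨s0, hs0, h⟩ := this
  filter_upwards [Ioo_mem_nhdsGT hs0] with s hs
  exact h.le.trans (bmR_anti h0 hn hs.1 hs.2.le)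

lemma bm_fin {p : ℕ} {P r} (h : ExpBM p (bmR τ 0) P r) :
    ∀ k ≤ p, Integrable (fun t => t^k) τ := by
  intro k
  induction k using Nat.strong_induction_on with
  | _ k ih =>
  intro hk
  rcases k with _ | n
  · simp
  by_contra hcon
  have hprev : ∀ k ≤ n, Integrable (fun t => t^k) τ := fun k hk' => ih k (by omega) (by omega)
  have hinf := bmR_top h0 (hprev n le_rfl) hcon
  obtain ⟨Q, -, hQ⟩ := bm_expand h0 n hprev
  obtain ⟨-, h1, h2, -⟩ := h
  have hn := bmR_lim h0 (hprev n le_rfl)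
  have hv : Tendsto (fun s => (-1)^p * (s^(p-n) * r s)) (nhdsWithin (0:ℝ) (Ioi 0)) (nhds 0) := by
    simpa using (bm_pow_r h2 (p-n) (by omega)).const_mul ((-1)^p)
  obtain ⟨c, hc⟩ := bm_polylim n (Q - P) (fun s => (-1)^p * (s^(p-n) * r s) - (-1)^n * bmR τ n s) (by
      filter_upwards [h1, self_mem_nhdsWithin] with s hs hs0
      have e := hQ s hs0
      rw [hs] at e
      have : s^p = s^n * s^(p-n) := by rw [← pow_add]; congr 1; omega
      rw [this] at e
      rw [Polynomial.eval_sub]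
      linear_combination -e) (by
      have := (bm_tid.mul hv).sub (hn.const_mul ((-1)^n))
      simp only [mul_zero, sub_zero] at this
      refine this.congr fun s => ?_
      ring)
  have := (hv.sub hc).const_mul ((-1)^n)
  refine not_tendsto_nhds_of_tendsto_atTop hinf _ (this.congr fun s => ?_)
  have : ((-1:ℝ)^n) * (-1)^n = 1 := by rw [← mul_pow]; simp
  linear_combination bmR τ n s * this

lemma bm_inf {p : ℕ} {P r} (h : ExpBM p (bmR τ 0) P r)
    (hr : Tendsto r (nhdsWithin (0:ℝ) (Ioi 0)) atTop) : ¬ Integrable (fun t => t^(p+1)) τ := by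
  intro hcon
  have hprev := bm_fin h0 h
  obtain ⟨Q, -, hQ⟩ := bm_expand h0 p hprev
  obtain ⟨-, h1, h2, -⟩ := h
  have hn := bmR_lim h0 (hprev p le_rfl)
  obtain ⟨c, hc⟩ := bm_polylim p (Q - P) (fun s => (-1)^p * (r s - bmR τ p s)) (by
      filter_upwards [h1, self_mem_nhdsWithin] with s hs hs0
      have e := hQ s hs0
      rw [hs] at e
      rw [Polynomial.eval_sub]
      linear_combination -e) (by
      have := (h2.sub hn).const_mul ((-1)^p)
      simp only [mul_zero, sub_zero] at this
      refine this.congr fun s => ?_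
      ring)
  have h5 := hc.const_mul ((-1)^p)
  have h6 : Tendsto (fun s => r s - bmR τ p s) (nhdsWithin (0:ℝ) (Ioi 0)) atTop := by
    apply tendsto_atTop_add_right_of_le' _ (-∫ t, t^(p+1) ∂τ) hr
    filter_upwards [self_mem_nhdsWithin] with s hs
    exact neg_le_neg (bmR_le h0 hcon hs)
  refine not_tendsto_nhds_of_tendsto_atTop h6 _ (h5.congr fun s => ?_)
  have : ((-1:ℝ)^p) * (-1)^p = 1 := by rw [← mul_pow]; simp
  linear_combination (r s - bmR τ p s) * this

lemma bm_lower {p q : ℕ} (h : p ≤ q) (hn : Integrable (fun t => t^q) τ) :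
    Integrable (fun t => t^p) τ := by
  refine (hn.add (integrable_const (1:ℝ))).mono' (by fun_prop) ?_
  filter_upwards [h0] with t ht
  rw [Real.norm_of_nonneg (by positivity)]
  simp only [Pi.add_apply]
  rcases le_total t 1 with h1 | h1
  · have := pow_le_one₀ ht h1 (n := p)
    have : 0 ≤ t^q := by positivity
    linarith
  · have := pow_le_pow_right₀ h1 h
    linarith

lemma bm_memMp_iff (n : ℕ) : (∫⁻ x, ENNReal.ofReal (x ^ n) ∂τ) ≠ ⊤ ↔ Integrable (fun t => t^n) τ := by
  rw [← lt_top_iff_ne_top, ← hasFiniteIntegral_iff_ofReal (by filter_upwards [h0] with t ht; positivity)]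
  exact ⟨fun h => ⟨by fun_prop, h⟩, fun h => h.2⟩

lemma bm_G {s : ℝ} (hs : 0 < s) : 0 < 1 - s * bmR τ 0 s := by
  have hi := bmR_int h0 (n := 0) (by simp) hs
  have : 1 - s * bmR τ 0 s = ∫ t, 1 / (1 + s * t) ∂τ := by
    unfold bmR
    rw [← integral_const_mul]
    have e : (1:ℝ) = ∫ t, (1:ℝ) ∂τ := by simp
    refine (congrArg (· - ∫ a, s * (a ^ (0 + 1) / (1 + s * a)) ∂τ) e).trans ?_
    rw [← integral_sub (integrable_const 1) (hi.const_mul s)]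
    apply integral_congr_ae
    filter_upwards [h0] with t ht
    have : 1 + s * t ≠ 0 := by positivity
    field_simp
    ring
  have hi2 : Integrable (fun t => 1 / (1 + s * t)) τ := by
    refine (integrable_const (1:ℝ)).mono' (Measurable.aestronglyMeasurable (by fun_prop)) ?_
    filter_upwards [h0] with t ht
    rw [Real.norm_of_nonneg (by positivity), div_le_iff₀ (by positivity)]
    nlinarith [mul_nonneg hs.le ht]
  rw [this]
  apply (integral_pos_iff_support_of_nonneg_ae _ hi2).2
  · have : Function.support (fun t : ℝ => 1 / (1 + s * t)) =ᵐ[τ] (Set.univ : Set ℝ) := by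
      filter_upwards [h0] with t ht
      have : 1 / (1 + s * t) ≠ 0 := by positivity
      apply propext
      exact ⟨fun _ => trivial, fun _ => this⟩
    rw [measure_congr this]; simp
  · filter_upwards [h0] with t ht
    simp only [Pi.zero_apply]; positivity

lemma bm_H {s : ℝ} (hs : 0 < s) {n : ℕ} (hinf : ¬ Integrable (fun t => t^(n+1)) τ) :
    0 < bmR τ 0 s := by
  refine lt_of_le_of_ne (bmR_nonneg h0 0 hs) fun h => hinf ?_
  have hi := bmR_int h0 (n := 0) (by simp) hs
  have := (integral_eq_zero_iff_of_nonneg_ae (by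
    filter_upwards [h0] with t ht
    simp only [Pi.zero_apply]; positivity) hi).1 h.symm
  refine (integrable_zero ℝ ℝ τ).congr ?_
  filter_upwards [h0, this] with t ht h2
  simp only [Pi.zero_apply, zero_add, pow_one, div_eq_zero_iff] at h2
  rcases h2 with h2 | h2
  · simp [h2]
  · nlinarith [mul_nonneg hs.le ht]

end

lemma bm_Psi (τ : Measure ℝ) (s : ℝ) :
    PsiTrans τ ((-s : ℝ) : ℂ) = ((-(s * bmR τ 0 s) : ℝ) : ℂ) := by
  unfold PsiTrans bmR
  rw [← integral_const_mul, ← integral_neg, ← integral_complex_ofReal]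
  congr 1
  funext t
  push_cast
  rw [pow_one, neg_mul, sub_neg_eq_add, ← mul_div_assoc, neg_div]

lemma bm_B {τ : Measure ℝ} {s : ℝ} (hs : 0 < s) :
    Btrans τ ((-s : ℝ) : ℂ) = (((1 - s * bmR τ 0 s) / bmR τ 0 s : ℝ) : ℂ) := by
  unfold Btrans etaTrans
  rw [bm_Psi]
  norm_cast
  rw [div_div_eq_mul_div, ← sub_eq_add_neg, neg_mul, neg_div_neg_eq, mul_div_mul_left _ _ hs.ne']

lemma bm_key {μ ν ρ : Measure ℝ}
    [IsProbabilityMeasure μ] [IsProbabilityMeasure ν] [IsProbabilityMeasure ρ]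
    (hμ0 : ∀ᵐ t ∂μ, 0 ≤ t) (hν0 : ∀ᵐ t ∂ν, 0 ≤ t) (hρ0 : ∀ᵐ t ∂ρ, 0 ≤ t) {p q : ℕ}
    (hμ : ¬ Integrable (fun t => t^(p+1)) μ) (hν : ¬ Integrable (fun t => t^(q+1)) ν)
    (hB : ∀ z : ℂ, offHalfLine z → Btrans ρ z = Btrans μ z * Btrans ν z) {s : ℝ} (hs : 0 < s) :
    bmR ρ 0 s / (1 - s * bmR ρ 0 s) =
      (bmR μ 0 s / (1 - s * bmR μ 0 s)) * (bmR ν 0 s / (1 - s * bmR ν 0 s)) := by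
  have h := hB ((-s : ℝ) : ℂ) (Or.inr (by simpa using hs))
  rw [bm_B hs, bm_B hs, bm_B hs] at h
  have h' : (1 - s * bmR ρ 0 s) / bmR ρ 0 s =
    (1 - s * bmR μ 0 s) / bmR μ 0 s * ((1 - s * bmR ν 0 s) / bmR ν 0 s) := by exact_mod_cast h
  have := congrArg (fun x => x⁻¹) h'
  simpa only [mul_inv, inv_div] using this

lemma bm_expK {τ : Measure ℝ} [IsProbabilityMeasure τ] (h0 : ∀ᵐ t ∂τ, 0 ≤ t) {p q : ℕ} (hp : 1 ≤ p)
    (hpq : p ≤ q) (hq : Integrable (fun t => t^q) τ) (hinf : ¬ Integrable (fun t => t^(q+1)) τ) :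
    ∃ P r, ExpBM p (fun s => bmR τ 0 s / (1 - s * bmR τ 0 s)) P r ∧
      (p = q → Tendsto r (nhdsWithin (0:ℝ) (Ioi 0)) atTop) := by
  have hk : ∀ k ≤ p, Integrable (fun t => t^k) τ := fun k hk => bm_lower h0 (hk.trans hpq) hq
  obtain ⟨Q, hQ0, hQ⟩ := bm_expand h0 p hk
  have hex : ExpBM p (bmR τ 0) Q (bmR τ p) := by
    refine ⟨?_, ?_, bmR_lim h0 (hk p le_rfl), 0, ?_⟩
    · rw [hQ0 hp]
      refine (bm_H h0 one_pos hinf).trans_le ?_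
      have := bmR_le h0 (n := 0) (by simpa using hk 1 hp) one_pos
      simpa using this
    · filter_upwards [self_mem_nhdsWithin] with s hs using hQ s hs
    · filter_upwards [self_mem_nhdsWithin] with s hs using bmR_nonneg h0 p hs
  obtain ⟨P, r, h1, h2⟩ := bm_moeb hp (-1) hex
  refine ⟨P, r, ?_, ?_⟩
  · have : (fun s => bmR τ 0 s / (1 - s * bmR τ 0 s)) =
        fun s => bmR τ 0 s / (1 + -1 * s * bmR τ 0 s) := by
      funext s; congr 1; ring
    rw [this]; exact h1
  · rintro rfl
    exact h2 (bmR_top h0 hq hinf)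

/-- moments of the multiplicative Boolean convolution. -/
theorem mult_boolean_moments
    (p q : ℕ) (hpq : p ≤ q) (hq : 1 ≤ q)
    (μ ν ρ : Measure ℝ)
    [IsProbabilityMeasure μ] [IsProbabilityMeasure ν] [IsProbabilityMeasure ρ]
    (hsuppμ : μ (Set.Iio (0 : ℝ)) = 0) (hsuppν : ν (Set.Iio (0 : ℝ)) = 0)
    (hsuppρ : ρ (Set.Iio (0 : ℝ)) = 0)
    (hμ : MemMp μ p) (hν : MemMp ν q)
    (hB : ∀ z : ℂ, offHalfLine z → Btrans ρ z = Btrans μ z * Btrans ν z) :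
    MemMp ρ p := by
  have hμ0 : ∀ᵐ t ∂μ, 0 ≤ t := by
    rw [ae_iff]; simp only [not_le]; exact hsuppμ
  have hν0 : ∀ᵐ t ∂ν, 0 ≤ t := by
    rw [ae_iff]; simp only [not_le]; exact hsuppν
  have hρ0 : ∀ᵐ t ∂ρ, 0 ≤ t := by
    rw [ae_iff]; simp only [not_le]; exact hsuppρ
  have conv : ∀ (τ : Measure ℝ) (_ : ∀ᵐ t ∂τ, 0 ≤ t) [IsProbabilityMeasure τ] (n : ℕ),
      MemMp τ n ↔ Integrable (fun t => t^n) τ ∧ ¬ Integrable (fun t => t^(n+1)) τ := by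
    intro τ h0 _ n
    unfold MemMp
    rw [bm_memMp_iff h0, ← bm_memMp_iff h0 (n+1), not_not]
  rw [conv _ hμ0] at hμ
  rw [conv _ hν0] at hν
  rw [conv _ hρ0]
  have key := fun s (hs : 0 < s) => bm_key hμ0 hν0 hρ0 hμ.2 hν.2 hB hs
  rcases Nat.eq_zero_or_pos p with rfl | hp
  · refine ⟨by simp, fun hcon => ?_⟩
    have h0int : ∀ (τ : Measure ℝ) [IsProbabilityMeasure τ], Integrable (fun t : ℝ => t^0) τ := by
      intro τ _; simp
    have hK : Tendsto (fun s => bmR ρ 0 s / (1 - s * bmR ρ 0 s))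
        (nhdsWithin (0:ℝ) (Ioi 0)) atTop := by
      have hA := (bmR_top hμ0 (h0int μ) hμ.2).atTop_mul_const (bm_H hν0 one_pos hν.2)
      refine tendsto_atTop_mono' _ ?_ hA
      filter_upwards [Ioo_mem_nhdsGT one_pos] with s hs
      rw [key s hs.1]
      have aux : ∀ (τ : Measure ℝ) (h0 : ∀ᵐ t ∂τ, 0 ≤ t) [IsProbabilityMeasure τ],
          bmR τ 0 s ≤ bmR τ 0 s / (1 - s * bmR τ 0 s) := by
        intro τ h0 _
        have h1 := bmR_nonneg h0 0 hs.1
        exact le_div_self h1 (bm_G h0 hs.1) (by nlinarith [hs.1])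
      have b1 := aux μ hμ0
      have b2 := aux ν hν0
      have b3 := bmR_anti hν0 (h0int ν) hs.1 hs.2.le
      have b4 := bmR_nonneg hμ0 0 hs.1
      have b5 := bmR_nonneg hν0 0 one_pos
      exact mul_le_mul b1 (b3.trans b2) b5 (b4.trans b1)
    have hl := bmR_lim hρ0 (h0int ρ)
    have hpos : ∀ᶠ s in nhdsWithin (0:ℝ) (Ioi 0), s ∈ Ioi (0:ℝ) := self_mem_nhdsWithin
    obtain ⟨s, hs, h1, h2⟩ := (hpos.and
      ((hl.eventually (gt_mem_nhds (show (0:ℝ) < 1/2 by norm_num))).and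
        (hK.eventually_gt_atTop (2 * ∫ t, t^(0+1) ∂ρ)))).exists
    have hs : 0 < s := hs
    have h3 := bmR_le hρ0 hcon hs
    have h4 := bmR_nonneg hρ0 0 hs
    rw [lt_div_iff₀ (bm_G hρ0 hs)] at h2
    nlinarith
  · obtain ⟨P, r, hP, hr⟩ := bm_expK hμ0 hp le_rfl hμ.1 hμ.2
    obtain ⟨Q, t, hQ, -⟩ := bm_expK hν0 hp hpq hν.1 hν.2
    obtain ⟨r', h1, h2⟩ := bm_mul hp hQ hP (hr rfl)
    obtain ⟨P', r'', h3, h4⟩ := bm_moeb hp 1 h1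
    have h5 : ExpBM p (bmR ρ 0) P' r'' := by
      obtain ⟨a, b, c⟩ := h3
      refine ⟨a, ?_, c⟩
      filter_upwards [b, self_mem_nhdsWithin] with s hs hs0
      rw [← hs, mul_comm (bmR ν 0 s / _), ← key s hs0]
      have hG := (bm_G hρ0 hs0).ne'
      have : 1 + 1 * s * (bmR ρ 0 s / (1 - s * bmR ρ 0 s)) = 1 / (1 - s * bmR ρ 0 s) := by
        rw [eq_div_iff hG, add_mul, mul_assoc, div_mul_cancel₀ _ hG]; ring
      rw [this, div_div_div_cancel_right₀ hG, div_one]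
    exact ⟨bm_fin hρ0 h5 p le_rfl, bm_inf hρ0 h5 (h4 h2)⟩
end
end
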